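/- arXiv:1010.3978 — 8 statements merged into one kernel-verified Lean document; each statement's English description precedes it below -/
import Mathlib

section
/- Let H be a complex Hilbert space, D ⊆ H a dense subspace, and T : D → H a symmetric linear operator. If D contains a set of analytic vectors for T that is dense in H, then T is essentially self-adjoint. -/
open scoped InnerProductSpace

/-- A densely defined symmetric operator is *essentially self-adjoint* iff the ranges of
`T + iI` and `T - iI` are both dense in `H`. -/
def EssSelfAdjoint {H : Type*} [NormedAddCommGroup H] [InnerProductSpace ℂ H]
    (D : Submodule ℂ H) (T : D →ₗ[ℂ] H) : Prop :=
  Dense (Set.range fun x : D => T x + Complex.I • (x : H)) ∧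
    Dense (Set.range fun x : D => T x - Complex.I • (x : H))

/-- `v ∈ D` is an analytic vector for `T : D → H` if all iterates `T^n v` are defined and lie
in `D`, and `‖T^n v‖ ≤ c^(n+1) n!` for some `c > 0`.  The sequence `u` records the iterates,
`u n = T^n v`. -/
def IsAnalyticVector {H : Type*} [NormedAddCommGroup H] [InnerProductSpace ℂ H]
    {D : Submodule ℂ H} (T : D →ₗ[ℂ] H) (v : D) : Prop :=
  ∃ u : ℕ → D, u 0 = v ∧ (∀ n : ℕ, ((u (n + 1) : H)) = T (u n)) ∧
    ∃ c : ℝ, 0 < c ∧ ∀ n : ℕ, ‖(u n : H)‖ ≤ c ^ (n + 1) * (Nat.factorial n : ℝ)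

/-- The Cauchy product formula for the inner product of two absolutely convergent series. -/
theorem inner_tsum_tsum_eq_tsum_sum_antidiagonal {H : Type*} [NormedAddCommGroup H]
    [InnerProductSpace ℂ H] [CompleteSpace H] {f g : ℕ → H}
    (hf : Summable fun k => ‖f k‖) (hg : Summable fun k => ‖g k‖) :
    ⟪∑' j, f j, ∑' k, g k⟫_ℂ =
      ∑' N, ∑ p ∈ Finset.HasAntidiagonal.antidiagonal N, ⟪f p.1, g p.2⟫_ℂ := by
  have hfg : Summable fun p : ℕ × ℕ => ⟪f p.1, g p.2⟫_ℂ :=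
    .of_norm_bounded (hf.mul_of_nonneg hg (fun _ => norm_nonneg _) (fun _ => norm_nonneg _))
      fun p => norm_inner_le_norm _ _
  have hprod : ⟪∑' j, f j, ∑' k, g k⟫_ℂ = ∑' p : ℕ × ℕ, ⟪f p.1, g p.2⟫_ℂ := by
    rw [hfg.tsum_prod]
    have hright (x : H) : ⟪x, ∑' k, g k⟫_ℂ = ∑' k, ⟪x, g k⟫_ℂ :=
      (innerSL ℂ x).map_tsum hg.of_norm
    have hleft (y : H) : ⟪∑' j, f j, y⟫_ℂ = ∑' j, ⟪f j, y⟫_ℂ :=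
      ((innerSLFlip ℂ) y).map_tsum hf.of_norm
    rw [hleft]
    exact tsum_congr fun j => hright _
  rw [hprod, ← Finset.HasAntidiagonal.sigmaAntidiagonalEquivProd.tsum_eq]
  rw [← Finset.HasAntidiagonal.sigmaAntidiagonalEquivProd.summable_iff] at hfg
  refine (hfg.tsum_sigma' fun n => (hasSum_fintype _).summable).trans (tsum_congr fun n => ?_)
  rw [tsum_fintype]
  exact Finset.sum_finset_coe (fun p : ℕ × ℕ => ⟪f p.1, g p.2⟫_ℂ) _

/-- The exponential flow on orbits: if `u n = T ^ n v`, then formally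
`expFlow a u n = T ^ n (exp (a T) v)`. -/
noncomputable def expFlow {H : Type*} [NormedAddCommGroup H] [InnerProductSpace ℂ H]
    (a : ℂ) (u : ℕ → H) (n : ℕ) : H :=
  ∑' k : ℕ, (a ^ k / (k.factorial : ℂ)) • u (n + k)

theorem summable_norm_expFlow {H : Type*} [NormedAddCommGroup H] [InnerProductSpace ℂ H]
    {u : ℕ → H} {c : ℝ} (hc : 0 < c) (hu : ∀ n, ‖u n‖ ≤ c ^ (n + 1) * (n.factorial : ℝ))
    {a : ℂ} (ha : ‖a‖ * c < 1) (n : ℕ) :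
    Summable fun k : ℕ => ‖(a ^ k / (k.factorial : ℂ)) • u (n + k)‖ := by
  have hgeom := (summable_choose_mul_geometric_of_norm_lt_one n (r := ‖a‖ * c)
    (by rwa [Real.norm_of_nonneg (by positivity)])).mul_left (c ^ (n + 1) * (n.factorial : ℝ))
  refine .of_nonneg_of_le (fun _ => norm_nonneg _) (fun k => ?_) hgeom
  have hchoose : ((k + n).choose n : ℝ) * n.factorial * k.factorial = (n + k).factorial := by
    rw [add_comm n k, ← Nat.add_choose_mul_factorial_mul_factorial k n]
    push_cast
    ring
  have hk : (k.factorial : ℝ) ≠ 0 := by positivity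
  rw [norm_smul, norm_div, norm_pow, Complex.norm_natCast]
  calc ‖a‖ ^ k / (k.factorial : ℝ) * ‖u (n + k)‖
      ≤ ‖a‖ ^ k / (k.factorial : ℝ) * (c ^ (n + k + 1) * ((n + k).factorial : ℝ)) := by
        gcongr
        exact hu _
    _ = c ^ (n + 1) * (n.factorial : ℝ) * (((k + n).choose n : ℝ) * (‖a‖ * c) ^ k) := by
        rw [← hchoose]
        field_simp
        ring

/-- For skew-adjoint `a`, the exponential flow preserves the Gram matrix of an orbit of a
symmetric operator. -/
theorem inner_expFlow_expFlow {H : Type*} [NormedAddCommGroup H] [InnerProductSpace ℂ H]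
    [CompleteSpace H] {u : ℕ → H} {c : ℝ} (hc : 0 < c)
    (hu : ∀ n, ‖u n‖ ≤ c ^ (n + 1) * (n.factorial : ℝ))
    (hsym : ∀ m n, ⟪u (m + 1), u n⟫_ℂ = ⟪u m, u (n + 1)⟫_ℂ)
    {a : ℂ} (ha : ‖a‖ * c < 1) (hskew : (starRingEnd ℂ) a = -a) (m n : ℕ) :
    ⟪expFlow a u m, expFlow a u n⟫_ℂ = ⟪u m, u n⟫_ℂ := by
  have hshift (j m n : ℕ) : ⟪u (m + j), u n⟫_ℂ = ⟪u m, u (n + j)⟫_ℂ := by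
    induction j generalizing n with
    | zero => rfl
    | succ j ih => rw [← add_assoc, hsym, ih, add_right_comm, add_assoc]
  have hterm (N : ℕ) : ∑ p ∈ Finset.HasAntidiagonal.antidiagonal N,
      ⟪(a ^ p.1 / (p.1.factorial : ℂ)) • u (m + p.1),
        (a ^ p.2 / (p.2.factorial : ℂ)) • u (n + p.2)⟫_ℂ =
      (-a + a) ^ N / (N.factorial : ℂ) * ⟪u m, u (n + N)⟫_ℂ := by
    rw [(Commute.all (-a) a).add_pow', Finset.sum_div, Finset.sum_mul]
    refine Finset.sum_congr rfl fun p hp => ?_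
    obtain rfl := Finset.HasAntidiagonal.mem_antidiagonal.mp hp
    rw [inner_smul_left, inner_smul_right, hshift, add_assoc, add_comm p.2 p.1, map_div₀,
      map_pow, hskew, map_natCast, nsmul_eq_mul]
    have hchoose : ((p.1 + p.2).choose p.1 : ℂ) * p.1.factorial * p.2.factorial =
        (p.1 + p.2).factorial := by
      rw [Nat.choose_symm_add]
      exact_mod_cast Nat.add_choose_mul_factorial_mul_factorial p.1 p.2
    have h₁ : (p.1.factorial : ℂ) ≠ 0 := by exact_mod_cast p.1.factorial_ne_zero
    have h₂ : (p.2.factorial : ℂ) ≠ 0 := by exact_mod_cast p.2.factorial_ne_zero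
    have h₃ : ((p.1 + p.2).factorial : ℂ) ≠ 0 := by
      exact_mod_cast (p.1 + p.2).factorial_ne_zero
    field_simp
    rw [← hchoose]
    ring
  rw [expFlow, expFlow, inner_tsum_tsum_eq_tsum_sum_antidiagonal
    (summable_norm_expFlow hc hu ha m) (summable_norm_expFlow hc hu ha n),
    tsum_congr hterm, tsum_eq_single 0]
  · simp
  · intro N hN
    simp [hN]

theorem inner_expFlow_of_inner_succ {H : Type*} [NormedAddCommGroup H] [InnerProductSpace ℂ H]
    [CompleteSpace H] {u : ℕ → H} {c : ℝ} (hc : 0 < c)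
    (hu : ∀ n, ‖u n‖ ≤ c ^ (n + 1) * (n.factorial : ℝ))
    {a : ℂ} (ha : ‖a‖ * c < 1) {w : H} {z : ℂ}
    (hw : ∀ n, ⟪w, u (n + 1)⟫_ℂ = z * ⟪w, u n⟫_ℂ) (n : ℕ) :
    ⟪w, expFlow a u n⟫_ℂ = Complex.exp (a * z) * ⟪w, u n⟫_ℂ := by
  have hpow (k : ℕ) : ⟪w, u (n + k)⟫_ℂ = z ^ k * ⟪w, u n⟫_ℂ := by
    induction k with
    | zero => simp
    | succ k ih => rw [← add_assoc, hw, ih, pow_succ]; ring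
  have htsum : ⟪w, expFlow a u n⟫_ℂ =
      ∑' k : ℕ, ⟪w, (a ^ k / (k.factorial : ℂ)) • u (n + k)⟫_ℂ :=
    (innerSL ℂ w).map_tsum (summable_norm_expFlow hc hu ha n).of_norm
  rw [htsum, Complex.exp_eq_exp_ℂ, NormedSpace.exp_eq_tsum_div, ← tsum_mul_right]
  refine tsum_congr fun k => ?_
  rw [inner_smul_right, hpow, mul_pow]
  ring

/-- If `w` is formally an eigenvector of the adjoint with non-real eigenvalue, then iterating the
flow in the direction in which `⟪w, ·⟫` grows bounds arbitrarily large multiples of `⟪w, u 0⟫`. -/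
theorem norm_exp_pow_mul_norm_inner_le {H : Type*} [NormedAddCommGroup H]
    [InnerProductSpace ℂ H] [CompleteSpace H] {c : ℝ} (hc : 0 < c)
    {a : ℂ} (ha : ‖a‖ * c < 1) (hskew : (starRingEnd ℂ) a = -a) {w : H} {z : ℂ} (N : ℕ)
    {u : ℕ → H} (hu : ∀ n, ‖u n‖ ≤ c ^ (n + 1) * (n.factorial : ℝ))
    (hsym : ∀ m n, ⟪u (m + 1), u n⟫_ℂ = ⟪u m, u (n + 1)⟫_ℂ)
    (hw : ∀ n, ⟪w, u (n + 1)⟫_ℂ = z * ⟪w, u n⟫_ℂ) :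
    ‖Complex.exp (a * z)‖ ^ N * ‖⟪w, u 0⟫_ℂ‖ ≤ ‖w‖ * ‖u 0‖ := by
  induction N generalizing u with
  | zero => simpa using norm_inner_le_norm w (u 0)
  | succ N ih =>
    have hgram := inner_expFlow_expFlow hc hu hsym ha hskew
    have hpair := inner_expFlow_of_inner_succ hc hu ha hw
    have hnorm (n : ℕ) : ‖expFlow a u n‖ = ‖u n‖ := by
      rw [@norm_eq_sqrt_re_inner ℂ, hgram, ← @norm_eq_sqrt_re_inner ℂ]
    have hstep := ih (u := expFlow a u) (fun n => (hnorm n).trans_le (hu n))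
      (fun m n => by rw [hgram, hgram, hsym])
      (fun n => by rw [hpair, hpair, hw]; ring)
    rwa [hpair, norm_mul, hnorm, ← mul_assoc, ← pow_succ] at hstep

theorem inner_eq_zero_of_one_lt_norm_exp {H : Type*} [NormedAddCommGroup H]
    [InnerProductSpace ℂ H] [CompleteSpace H] {c : ℝ} (hc : 0 < c)
    {a : ℂ} (ha : ‖a‖ * c < 1) (hskew : (starRingEnd ℂ) a = -a) {w : H} {z : ℂ}
    (hexp : 1 < ‖Complex.exp (a * z)‖)
    {u : ℕ → H} (hu : ∀ n, ‖u n‖ ≤ c ^ (n + 1) * (n.factorial : ℝ))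
    (hsym : ∀ m n, ⟪u (m + 1), u n⟫_ℂ = ⟪u m, u (n + 1)⟫_ℂ)
    (hw : ∀ n, ⟪w, u (n + 1)⟫_ℂ = z * ⟪w, u n⟫_ℂ) :
    ⟪w, u 0⟫_ℂ = 0 := by
  by_contra hne
  have hpos : 0 < ‖⟪w, u 0⟫_ℂ‖ := norm_pos_iff.mpr hne
  obtain ⟨N, hN⟩ := pow_unbounded_of_one_lt (‖w‖ * ‖u 0‖ / ‖⟪w, u 0⟫_ℂ‖) hexp
  rw [div_lt_iff₀ hpos] at hN
  exact hN.not_ge (norm_exp_pow_mul_norm_inner_le hc ha hskew N hu hsym hw)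

/-- Deficiency vectors are orthogonal to analytic vectors: if `⟪w, T x⟫ = z ⟪w, x⟫` on `D` with
`z` non-real, then `w` is orthogonal to every analytic vector of `T`. -/
theorem IsAnalyticVector.inner_eq_zero {H : Type*} [NormedAddCommGroup H]
    [InnerProductSpace ℂ H] [CompleteSpace H] {D : Submodule ℂ H} {T : D →ₗ[ℂ] H} {v : D}
    (hv : IsAnalyticVector T v)
    (hsym : ∀ x y : D, ⟪T x, (y : H)⟫_ℂ = ⟪(x : H), T y⟫_ℂ) {w : H} {z : ℂ} (hz : z.im ≠ 0)
    (hw : ∀ x : D, ⟪w, T x⟫_ℂ = z * ⟪w, (x : H)⟫_ℂ) :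
    ⟪w, (v : H)⟫_ℂ = 0 := by
  obtain ⟨u, rfl, hT, c, hc, hu⟩ := hv
  have habs : 0 < |z.im| := abs_pos.mpr hz
  let s : ℝ := -z.im / (2 * c * |z.im|)
  have hs : |s| * c < 1 := by
    have : |s| * c = 1 / 2 := by
      simp only [s, abs_div, abs_neg, abs_mul, abs_abs, abs_of_pos hc, Nat.abs_ofNat]
      field_simp
    linarith
  refine inner_eq_zero_of_one_lt_norm_exp (u := fun n => (u n : H)) (a := s * Complex.I) (z := z)
    hc (by simpa using hs) (by simp) ?_ hu (fun m n => by rw [hT, hT, hsym])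
    (fun n => by rw [hT, hw])
  have hre : (s * Complex.I * z).re = z.im ^ 2 / (2 * c * |z.im|) := by
    trans -s * z.im
    · simp
    · simp only [s]
      ring
  rw [Complex.norm_exp, hre, Real.one_lt_exp_iff]
  positivity

/-- The range of `T - z` is dense for non-real `z`. -/
theorem dense_range_sub_smul_of_dense_analytic {H : Type*} [NormedAddCommGroup H]
    [InnerProductSpace ℂ H] [CompleteSpace H] {D : Submodule ℂ H} {T : D →ₗ[ℂ] H}
    (hsym : ∀ x y : D, ⟪T x, (y : H)⟫_ℂ = ⟪(x : H), T y⟫_ℂ)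
    {S : Set D} (hS : ∀ v ∈ S, IsAnalyticVector T v)
    (hdense : Dense (Subtype.val '' S : Set H)) {z : ℂ} (hz : z.im ≠ 0) :
    Dense (Set.range fun x : D => T x - z • (x : H)) := by
  suffices h : (LinearMap.range (T - z • D.subtype)).topologicalClosure = ⊤ from
    Submodule.dense_iff_topologicalClosure_eq_top.mpr h
  rw [Submodule.topologicalClosure_eq_top_iff, Submodule.eq_bot_iff]
  intro w hw
  refine hdense.eq_zero_of_inner_left ℂ ?_
  rintro _ ⟨v, hv, rfl⟩
  refine (hS v hv).inner_eq_zero hsym hz fun x => ?_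
  have hx := (Submodule.mem_orthogonal' _ _).mp hw _ (LinearMap.mem_range_self _ x)
  simpa [inner_sub_right, inner_smul_right, sub_eq_zero] using hx

/-- **Nelson's Theorem.** A symmetric, densely defined operator whose domain contains a set of
analytic vectors which is dense in `H` is essentially self-adjoint. -/
theorem nelson_theorem {H : Type*} [NormedAddCommGroup H] [InnerProductSpace ℂ H]
    [CompleteSpace H] {D : Submodule ℂ H} (hD : Dense (D : Set H)) (T : D →ₗ[ℂ] H)
    (hsym : ∀ x y : D, ⟪T x, (y : H)⟫_ℂ = ⟪(x : H), T y⟫_ℂ)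
    (S : Set D) (hS : ∀ v ∈ S, IsAnalyticVector T v)
    (hdense : Dense (Subtype.val '' S : Set H)) :
    EssSelfAdjoint D T := by
  refine ⟨?_, dense_range_sub_smul_of_dense_analytic hsym hS hdense (by simp)⟩
  simpa using dense_range_sub_smul_of_dense_analytic hsym hS hdense (z := -Complex.I) (by simp)
end

section
/- Let A be an essentially self-adjoint operator on a complex Hilbert space H with dense domain D, and let B be a symmetric operator with the same domain D such that ‖Bφ‖ ≤ ‖Aφ‖ + b‖φ‖ for some constant b ≥ 0 and all φ ∈ D. Then the operator A + B with domain D is essentially self-adjoint. -/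
open scoped InnerProductSpace

/-- The range of `S` is dense as soon as no nonzero vector is orthogonal to it. -/
theorem dense_range_of_forall_inner_eq_zero {H E : Type*} [NormedAddCommGroup H]
    [InnerProductSpace ℂ H] [CompleteSpace H] [AddCommGroup E] [Module ℂ E] (S : E →ₗ[ℂ] H)
    (h : ∀ v : H, (∀ x, ⟪v, S x⟫_ℂ = 0) → v = 0) : Dense (Set.range S) := by
  rw [← LinearMap.coe_range, Submodule.dense_iff_topologicalClosure_eq_top,
    Submodule.topologicalClosure_eq_top_iff, Submodule.eq_bot_iff]
  intro v hv
  exact h v fun x => (Submodule.mem_orthogonal' _ _).1 hv _ (LinearMap.mem_range_self S x)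

/-- A bound `‖⟪v, y⟫‖ ≤ c * ‖y‖` on a dense range extends to `y = v`. -/
theorem norm_sq_le_of_dense_range {H E : Type*} [NormedAddCommGroup H]
    [InnerProductSpace ℂ H] {S : E → H} (hS : Dense (Set.range S)) {v : H} {c : ℝ}
    (h : ∀ x, ‖⟪v, S x⟫_ℂ‖ ≤ c * ‖S x‖) : ‖v‖ ^ 2 ≤ c * ‖v‖ := by
  have hclosed : IsClosed {y : H | ‖⟪v, y⟫_ℂ‖ ≤ c * ‖y‖} :=
    isClosed_le (by fun_prop) (by fun_prop)
  have hsub : Set.range S ⊆ {y : H | ‖⟪v, y⟫_ℂ‖ ≤ c * ‖y‖} := by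
    rintro _ ⟨x, rfl⟩
    exact h x
  have hv : ‖⟪v, v⟫_ℂ‖ ≤ c * ‖v‖ := hclosed.closure_subset_iff.2 hsub (hS v)
  rwa [inner_self_eq_norm_sq_to_K, norm_pow, RCLike.norm_ofReal, abs_norm] at hv

/-- Density of the range is stable under relatively bounded perturbations of relative bound
less than one. -/
theorem dense_range_add_of_norm_le {H E : Type*} [NormedAddCommGroup H]
    [InnerProductSpace ℂ H] [CompleteSpace H] [AddCommGroup E] [Module ℂ E] {S T : E →ₗ[ℂ] H}
    (hS : Dense (Set.range S)) {c : ℝ} (hc : c < 1) (hT : ∀ x, ‖T x‖ ≤ c * ‖S x‖) :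
    Dense (Set.range (S + T)) := by
  refine dense_range_of_forall_inner_eq_zero _ fun v hv => ?_
  have key : ‖v‖ ^ 2 ≤ (c * ‖v‖) * ‖v‖ := by
    refine norm_sq_le_of_dense_range hS fun x => ?_
    have hx : ⟪v, S x⟫_ℂ = -⟪v, T x⟫_ℂ := by
      have := hv x
      rw [LinearMap.add_apply, inner_add_right] at this
      exact eq_neg_of_add_eq_zero_left this
    calc ‖⟪v, S x⟫_ℂ‖ = ‖⟪v, T x⟫_ℂ‖ := by rw [hx, norm_neg]
      _ ≤ ‖v‖ * ‖T x‖ := norm_inner_le_norm _ _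
      _ ≤ ‖v‖ * (c * ‖S x‖) := by gcongr; exact hT x
      _ = c * ‖v‖ * ‖S x‖ := by ring
  have : ‖v‖ ^ 2 = 0 := by nlinarith [sq_nonneg ‖v‖]
  simpa using this

/-- For symmetric `T` and purely imaginary `z` of modulus one, `‖(T + z) x‖² = ‖T x‖² + ‖x‖²`. -/
theorem norm_add_smul_sq_of_symmetric {H : Type*} [NormedAddCommGroup H] [InnerProductSpace ℂ H]
    {D : Submodule ℂ H} {T : D →ₗ[ℂ] H}
    (hT : ∀ x y : D, ⟪T x, (y : H)⟫_ℂ = ⟪(x : H), T y⟫_ℂ) {z : ℂ} (hz : z.re = 0)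
    (hz' : ‖z‖ = 1) (x : D) :
    ‖T x + z • (x : H)‖ ^ 2 = ‖T x‖ ^ 2 + ‖(x : H)‖ ^ 2 := by
  have him : (⟪T x, (x : H)⟫_ℂ).im = 0 := by
    rw [← Complex.conj_eq_iff_im, inner_conj_symm, hT]
  rw [norm_add_sq (𝕜 := ℂ), inner_smul_right, norm_smul, hz']
  simp [hz, him]

section

variable {H : Type*} [NormedAddCommGroup H] [InnerProductSpace ℂ H] {D : Submodule ℂ H}
  {A B : D →ₗ[ℂ] H} {b : ℝ} {z : ℂ}

/-- The operator `A + t B + z` on the domain `D`. -/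
noncomputable def shiftedPencil (A B : D →ₗ[ℂ] H) (z : ℂ) (t : ℝ) : D →ₗ[ℂ] H :=
  A + (t : ℂ) • B + z • D.subtype

theorem shiftedPencil_apply (t : ℝ) (x : D) :
    shiftedPencil A B z t x = A x + (t : ℂ) • B x + z • (x : H) := rfl

theorem norm_sq_shiftedPencil
    (hAsym : ∀ x y : D, ⟪A x, (y : H)⟫_ℂ = ⟪(x : H), A y⟫_ℂ)
    (hBsym : ∀ x y : D, ⟪B x, (y : H)⟫_ℂ = ⟪(x : H), B y⟫_ℂ)
    (hz : z.re = 0) (hz' : ‖z‖ = 1) (t : ℝ) (x : D) :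
    ‖shiftedPencil A B z t x‖ ^ 2 = ‖A x + (t : ℂ) • B x‖ ^ 2 + ‖(x : H)‖ ^ 2 := by
  refine norm_add_smul_sq_of_symmetric (T := A + (t : ℂ) • B) (fun x y => ?_) hz hz' x
  simp [hAsym, hBsym]

theorem norm_le_norm_shiftedPencil
    (hAsym : ∀ x y : D, ⟪A x, (y : H)⟫_ℂ = ⟪(x : H), A y⟫_ℂ)
    (hBsym : ∀ x y : D, ⟪B x, (y : H)⟫_ℂ = ⟪(x : H), B y⟫_ℂ)
    (hz : z.re = 0) (hz' : ‖z‖ = 1) (t : ℝ) (x : D) :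
    ‖(x : H)‖ ≤ ‖shiftedPencil A B z t x‖ := by
  refine (sq_le_sq₀ (norm_nonneg _) (norm_nonneg _)).1 ?_
  rw [norm_sq_shiftedPencil hAsym hBsym hz hz']
  exact le_add_of_nonneg_left (sq_nonneg _)

theorem one_sub_mul_norm_le_norm_shiftedPencil
    (hAsym : ∀ x y : D, ⟪A x, (y : H)⟫_ℂ = ⟪(x : H), A y⟫_ℂ)
    (hBsym : ∀ x y : D, ⟪B x, (y : H)⟫_ℂ = ⟪(x : H), B y⟫_ℂ) (hb : 0 ≤ b)
    (hbound : ∀ φ : D, ‖B φ‖ ≤ ‖A φ‖ + b * ‖φ‖)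
    (hz : z.re = 0) (hz' : ‖z‖ = 1) {t : ℝ} (ht : 0 ≤ t) (x : D) :
    (1 - t) * ‖B x‖ ≤ (1 + b) * ‖shiftedPencil A B z t x‖ := by
  have hx := norm_le_norm_shiftedPencil hAsym hBsym hz hz' t x
  have hT : ‖A x + (t : ℂ) • B x‖ ≤ ‖shiftedPencil A B z t x‖ := by
    refine (sq_le_sq₀ (norm_nonneg _) (norm_nonneg _)).1 ?_
    rw [norm_sq_shiftedPencil hAsym hBsym hz hz']
    exact le_add_of_nonneg_right (sq_nonneg _)
  have hA : ‖A x‖ ≤ ‖A x + (t : ℂ) • B x‖ + t * ‖B x‖ := by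
    have := norm_sub_le (A x + (t : ℂ) • B x) ((t : ℂ) • B x)
    rwa [add_sub_cancel_right, norm_smul, Complex.norm_of_nonneg ht] at this
  have hB : ‖B x‖ ≤ ‖A x‖ + b * ‖(x : H)‖ := hbound x
  have := mul_le_mul_of_nonneg_left hx hb
  linarith

/-- Density of the range propagates from `t = 0` to every `t < 1`, in steps on which the
perturbation has relative bound less than one. -/
theorem dense_range_shiftedPencil [CompleteSpace H]
    (hAsym : ∀ x y : D, ⟪A x, (y : H)⟫_ℂ = ⟪(x : H), A y⟫_ℂ)
    (hBsym : ∀ x y : D, ⟪B x, (y : H)⟫_ℂ = ⟪(x : H), B y⟫_ℂ) (hb : 0 ≤ b)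
    (hbound : ∀ φ : D, ‖B φ‖ ≤ ‖A φ‖ + b * ‖φ‖)
    (hz : z.re = 0) (hz' : ‖z‖ = 1)
    (hA : Dense (Set.range fun x : D => A x + z • (x : H))) {t : ℝ} (ht : 0 ≤ t) (ht1 : t < 1) :
    Dense (Set.range (shiftedPencil A B z t)) := by
  have h1t : 0 < 1 - t := sub_pos.2 ht1
  obtain ⟨n, hn⟩ := exists_nat_gt (t * (1 + b) / (1 - t))
  have hn0 : (0 : ℝ) < n := lt_of_le_of_lt (by positivity) hn
  set δ := t / n with hδ
  have hδ0 : 0 ≤ δ := by positivity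
  have hnδ : n * δ = t := by rw [hδ]; field_simp
  have hc : δ * (1 + b) / (1 - t) < 1 := by
    rw [div_lt_iff₀ h1t] at hn
    rw [div_lt_one h1t, hδ, div_mul_eq_mul_div, div_lt_iff₀ hn0]
    linarith
  have step : ∀ k : ℕ, k ≤ n → Dense (Set.range (shiftedPencil A B z (k * δ))) := by
    intro k
    induction k with
    | zero =>
      intro _
      convert hA using 3 with x
      simp [shiftedPencil_apply]
    | succ k ih =>
      intro hk
      have hkt : k * δ ≤ t := by
        rw [← hnδ]
        gcongr
        exact (Nat.le_succ k).trans hk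
      have hsucc : shiftedPencil A B z ((k + 1 : ℕ) * δ)
          = shiftedPencil A B z (k * δ) + (δ : ℂ) • B := by
        ext x
        simp only [shiftedPencil_apply, LinearMap.add_apply, LinearMap.smul_apply]
        push_cast
        module
      rw [hsucc]
      refine dense_range_add_of_norm_le (ih ((Nat.le_succ k).trans hk)) hc fun x => ?_
      have hB := one_sub_mul_norm_le_norm_shiftedPencil hAsym hBsym hb hbound hz hz'
        (t := k * δ) (by positivity) x
      have hB' : (1 - t) * ‖B x‖ ≤ (1 + b) * ‖shiftedPencil A B z (k * δ) x‖ :=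
        le_trans (by gcongr) hB
      rw [LinearMap.smul_apply, norm_smul, Complex.norm_of_nonneg hδ0,
        div_mul_eq_mul_div (δ * (1 + b)), le_div_iff₀ h1t]
      calc δ * ‖B x‖ * (1 - t) = δ * ((1 - t) * ‖B x‖) := by ring
        _ ≤ δ * ((1 + b) * ‖shiftedPencil A B z (k * δ) x‖) := by gcongr
        _ = δ * (1 + b) * ‖shiftedPencil A B z (k * δ) x‖ := by ring
  rw [← hnδ]
  exact step n le_rfl

/-- If `A + z` has dense range for a purely imaginary `z` of modulus one, so has `A + B + z`. -/
theorem dense_range_add_add_smul [CompleteSpace H] (hD : Dense (D : Set H))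
    (hAsym : ∀ x y : D, ⟪A x, (y : H)⟫_ℂ = ⟪(x : H), A y⟫_ℂ)
    (hBsym : ∀ x y : D, ⟪B x, (y : H)⟫_ℂ = ⟪(x : H), B y⟫_ℂ) (hb : 0 ≤ b)
    (hbound : ∀ φ : D, ‖B φ‖ ≤ ‖A φ‖ + b * ‖φ‖)
    (hz : z.re = 0) (hz' : ‖z‖ = 1)
    (hA : Dense (Set.range fun x : D => A x + z • (x : H))) :
    Dense (Set.range fun x : D => (A + B) x + z • (x : H)) := by
  refine dense_range_of_forall_inner_eq_zero (A + B + z • D.subtype) fun v hv => ?_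
  have approx : ∀ t : ℝ, 0 ≤ t → t < 1 → ∀ η : D,
      ‖v‖ ^ 2 ≤ ((1 + b) * ‖v - η‖ + (1 - t) * ‖B η‖) * ‖v‖ := by
    intro t ht ht1 η
    refine norm_sq_le_of_dense_range
      (dense_range_shiftedPencil hAsym hBsym hb hbound hz hz' hA ht ht1) fun x => ?_
    have h1t : 0 ≤ 1 - t := by linarith
    have hsplit : shiftedPencil A B z t x
        = (A + B + z • D.subtype) x - ((1 - t : ℝ) : ℂ) • B x := by
      simp only [shiftedPencil_apply, LinearMap.add_apply, LinearMap.smul_apply,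
        Submodule.subtype_apply]
      push_cast
      module
    have hB := one_sub_mul_norm_le_norm_shiftedPencil hAsym hBsym hb hbound hz hz' ht x
    have hx := norm_le_norm_shiftedPencil hAsym hBsym hz hz' t x
    have hvB : ⟪v, B x⟫_ℂ = ⟪v - η, B x⟫_ℂ + ⟪B η, (x : H)⟫_ℂ := by
      rw [hBsym, inner_sub_left, sub_add_cancel]
    have hnorm : ‖⟪v, shiftedPencil A B z t x⟫_ℂ‖ = (1 - t) * ‖⟪v, B x⟫_ℂ‖ := by
      rw [hsplit, inner_sub_right, hv, zero_sub, norm_neg, inner_smul_right, norm_mul,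
        Complex.norm_of_nonneg h1t]
    calc ‖⟪v, shiftedPencil A B z t x⟫_ℂ‖
        = (1 - t) * ‖⟪v - η, B x⟫_ℂ + ⟪B η, (x : H)⟫_ℂ‖ := by rw [hnorm, hvB]
      _ ≤ (1 - t) * (‖v - η‖ * ‖B x‖ + ‖B η‖ * ‖(x : H)‖) := by
        gcongr
        exact (norm_add_le _ _).trans
          (add_le_add (norm_inner_le_norm _ _) (norm_inner_le_norm _ _))
      _ = ‖v - η‖ * ((1 - t) * ‖B x‖) + (1 - t) * ‖B η‖ * ‖(x : H)‖ := by ring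
      _ ≤ ‖v - η‖ * ((1 + b) * ‖shiftedPencil A B z t x‖)
          + (1 - t) * ‖B η‖ * ‖shiftedPencil A B z t x‖ := by gcongr
      _ = _ := by ring
  have limit : ∀ η : D, ‖v‖ ^ 2 ≤ (1 + b) * ‖v - η‖ * ‖v‖ := by
    intro η
    have hclosed : IsClosed
        {t : ℝ | ‖v‖ ^ 2 ≤ ((1 + b) * ‖v - η‖ + (1 - t) * ‖B η‖) * ‖v‖} :=
      isClosed_le (by fun_prop) (by fun_prop)
    have hsub := hclosed.closure_subset_iff.2
      (fun t (ht : t ∈ Set.Ico (0 : ℝ) 1) => approx t ht.1 ht.2 η)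
    rw [closure_Ico zero_ne_one] at hsub
    simpa using hsub (Set.right_mem_Icc.2 zero_le_one)
  have hclosed : IsClosed {y : H | ‖v‖ ^ 2 ≤ (1 + b) * ‖v - y‖ * ‖v‖} :=
    isClosed_le (by fun_prop) (by fun_prop)
  have hvv : ‖v‖ ^ 2 ≤ (1 + b) * ‖v - v‖ * ‖v‖ :=
    hclosed.closure_subset_iff.2 (fun y hy => limit ⟨y, hy⟩) (hD v)
  simpa using hvv

end

/-- **Wüst's Theorem.** If `A` is essentially self-adjoint on the dense domain `D` and `B` is a
symmetric operator with the same domain satisfying `‖Bφ‖ ≤ ‖Aφ‖ + b‖φ‖` for some `b ≥ 0`, then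
`A + B` is essentially self-adjoint on `D`. -/
theorem wuest_theorem {H : Type*} [NormedAddCommGroup H] [InnerProductSpace ℂ H]
    [CompleteSpace H] {D : Submodule ℂ H} (hD : Dense (D : Set H)) (A B : D →ₗ[ℂ] H)
    (hAsym : ∀ x y : D, ⟪A x, (y : H)⟫_ℂ = ⟪(x : H), A y⟫_ℂ)
    (hA : EssSelfAdjoint D A)
    (hBsym : ∀ x y : D, ⟪B x, (y : H)⟫_ℂ = ⟪(x : H), B y⟫_ℂ)
    (b : ℝ) (hb : 0 ≤ b)
    (hbound : ∀ φ : D, ‖B φ‖ ≤ ‖A φ‖ + b * ‖φ‖) :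
    EssSelfAdjoint D (A + B) := by
  refine ⟨dense_range_add_add_smul hD hAsym hBsym hb hbound Complex.I_re Complex.norm_I hA.1, ?_⟩
  have hneg : Dense (Set.range fun x : D => A x + (-Complex.I) • (x : H)) := by
    simpa only [neg_smul, ← sub_eq_add_neg] using hA.2
  simpa only [neg_smul, ← sub_eq_add_neg] using
    dense_range_add_add_smul hD hAsym hBsym hb hbound (by simp) (by simp) hneg
end

section
/- Let (H_n)_{n∈ℕ} be complex Hilbert spaces and H their Hilbert direct sum. For each n let D_n ⊆ H_n be a dense subspace and A_n : D_n → H_n a positive, essentially self-adjoint operator. Let D ⊆ H be the algebraic direct sum of the D_n (sequences ψ with ψ_n ∈ D_n for all n and ψ_n = 0 for all but finitely many n), and define on D the operators (Aψ)_n := A_n ψ_n and (Nψ)_n := n ψ_n. Let B : D → H be a symmetric operator, and suppose there exist constants c, d ≥ 0 such that for all ψ ∈ D: (i) ‖Bψ‖ ≤ d‖Nψ‖ + d‖ψ‖, and (ii) Re⟨Nψ, (A + B)ψ⟩ ≥ −c⟨ψ, (N + I)ψ⟩. Then the operator A + B with domain D is essentially self-adjoint. -/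
open scoped InnerProductSpace

section DenseRange

variable {H : Type*} [NormedAddCommGroup H] [InnerProductSpace ℂ H] {D : Submodule ℂ H}

/-- A linear map into a Hilbert space has dense range if only `0` is orthogonal to its range. -/
lemma denseRange_of_orthogonal [CompleteSpace H] {E : Type*} [AddCommGroup E] [Module ℂ E]
    (X : E →ₗ[ℂ] H) (h : ∀ φ : H, (∀ x, ⟪φ, X x⟫_ℂ = 0) → φ = 0) : DenseRange X := by
  have h1 : X.range.topologicalClosure = ⊤ := by
    rw [Submodule.topologicalClosure_eq_top_iff, Submodule.eq_bot_iff]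
    intro φ hφ
    exact h φ fun x => (Submodule.mem_orthogonal' _ _).1 hφ _ ⟨x, rfl⟩
  have h2 := Submodule.dense_iff_topologicalClosure_eq_top.2 h1
  rwa [LinearMap.coe_range] at h2

/-- Dense range is stable under relatively small perturbations. -/
lemma denseRange_add_of_norm_le [CompleteSpace H] {E : Type*} [AddCommGroup E] [Module ℂ E]
    {X Y : E →ₗ[ℂ] H} (hX : DenseRange X) {a : ℝ} (ha : a < 1)
    (hY : ∀ x, ‖Y x‖ ≤ a * ‖X x‖) : DenseRange (X + Y) := by
  apply denseRange_of_orthogonal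
  intro φ hφ
  have key : ∀ y : H, ‖⟪φ, y⟫_ℂ‖ ≤ a * ‖φ‖ * ‖y‖ := by
    refine fun y => hX.induction_on
      (p := fun y => ‖⟪φ, y⟫_ℂ‖ ≤ a * ‖φ‖ * ‖y‖) y
      (isClosed_le (by fun_prop) (by fun_prop)) fun x => ?_
    have h1 := hφ x
    rw [LinearMap.add_apply, inner_add_right] at h1
    rw [eq_neg_of_add_eq_zero_left h1, norm_neg]
    calc ‖⟪φ, Y x⟫_ℂ‖ ≤ ‖φ‖ * ‖Y x‖ := norm_inner_le_norm _ _
      _ ≤ ‖φ‖ * (a * ‖X x‖) := by gcongr; exact hY x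
      _ = a * ‖φ‖ * ‖X x‖ := by ring
  have h2 := key φ
  rw [inner_self_eq_norm_sq_to_K] at h2
  simp only [Complex.coe_algebraMap, norm_pow, Complex.norm_real, norm_norm] at h2
  by_contra hne
  have : 0 < ‖φ‖ := norm_pos_iff.2 hne
  nlinarith [mul_pos this this]

/-- The operator `S + iμ` on the domain of `S`. -/
noncomputable def imagShift (S : D →ₗ[ℂ] H) (μ : ℝ) : D →ₗ[ℂ] H :=
  S + (Complex.I * μ) • D.subtype

lemma imagShift_apply (S : D →ₗ[ℂ] H) (μ : ℝ) (x : D) :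
    imagShift S μ x = S x + (Complex.I * μ) • (x : H) := rfl

/-- Symmetry of a partially defined operator. -/
def IsSymm (S : D →ₗ[ℂ] H) : Prop := ∀ x y : D, ⟪S x, (y : H)⟫_ℂ = ⟪(x : H), S y⟫_ℂ

lemma IsSymm.add {S T : D →ₗ[ℂ] H} (hS : IsSymm S) (hT : IsSymm T) : IsSymm (S + T) := by
  intro x y
  simp only [LinearMap.add_apply, inner_add_left, inner_add_right, hS x y, hT x y]

lemma IsSymm.real_smul {S : D →ₗ[ℂ] H} (hS : IsSymm S) (r : ℝ) : IsSymm ((r : ℂ) • S) := by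
  intro x y
  simp only [LinearMap.smul_apply, inner_smul_left, inner_smul_right, hS x y, Complex.conj_ofReal]

lemma IsSymm.norm_imagShift_sq {S : D →ₗ[ℂ] H} (hS : IsSymm S) (μ : ℝ) (x : D) :
    ‖imagShift S μ x‖ ^ 2 = ‖S x‖ ^ 2 + μ ^ 2 * ‖x‖ ^ 2 := by
  have him : (⟪S x, (x : H)⟫_ℂ).im = 0 := by
    have h1 := congrArg Complex.im (hS x x)
    have h2 := congrArg Complex.im (inner_conj_symm (𝕜 := ℂ) (x : H) (S x))
    rw [Complex.conj_im] at h2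
    linarith
  rw [imagShift_apply, @norm_add_sq ℂ, inner_smul_right, norm_smul]
  simp only [Complex.norm_mul, Complex.norm_I, one_mul, Complex.norm_real, Real.norm_eq_abs,
    mul_pow, sq_abs, Submodule.coe_norm]
  have : RCLike.re (Complex.I * μ * ⟪S x, (x : H)⟫_ℂ) = 0 := by
    simp [him]
  rw [this]
  ring

lemma IsSymm.norm_le_norm_imagShift {S : D →ₗ[ℂ] H} (hS : IsSymm S) (μ : ℝ) (x : D) :
    ‖S x‖ ≤ ‖imagShift S μ x‖ :=
  le_of_sq_le_sq (by
    rw [hS.norm_imagShift_sq]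
    have : 0 ≤ μ ^ 2 * ‖x‖ ^ 2 := by positivity
    linarith) (norm_nonneg _)

lemma IsSymm.abs_mul_norm_le_norm_imagShift {S : D →ₗ[ℂ] H} (hS : IsSymm S) (μ : ℝ) (x : D) :
    |μ| * ‖x‖ ≤ ‖imagShift S μ x‖ :=
  le_of_sq_le_sq (by
    rw [hS.norm_imagShift_sq, mul_pow, sq_abs]
    have : 0 ≤ ‖S x‖ ^ 2 := by positivity
    linarith) (norm_nonneg _)

lemma IsSymm.denseRange_imagShift_mul_of_lt_two [CompleteSpace H] {S : D →ₗ[ℂ] H} (hS : IsSymm S)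
    {μ r : ℝ} (h : DenseRange (imagShift S μ)) (hr0 : 0 < r) (hr : r < 2) :
    DenseRange (imagShift S (r * μ)) := by
  have h1 : imagShift S (r * μ)
      = imagShift S μ + (Complex.I * ((r - 1) * μ : ℝ)) • D.subtype := by
    ext x
    simp only [imagShift, LinearMap.add_apply, LinearMap.smul_apply, add_assoc, ← add_smul]
    congr 2
    push_cast
    ring
  rw [h1]
  refine denseRange_add_of_norm_le h (a := |r - 1|) (abs_lt.2 ⟨by linarith, by linarith⟩)
    fun x => ?_
  calc ‖((Complex.I * ((r - 1) * μ : ℝ)) • D.subtype) x‖ = |r - 1| * (|μ| * ‖x‖) := by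
        rw [LinearMap.smul_apply, norm_smul, Complex.norm_mul, Complex.norm_I, Complex.norm_real,
          Real.norm_eq_abs, abs_mul, Submodule.subtype_apply, Submodule.coe_norm]
        ring
    _ ≤ _ := by gcongr; exact hS.abs_mul_norm_le_norm_imagShift μ x

lemma IsSymm.denseRange_imagShift_mul [CompleteSpace H] {S : D →ₗ[ℂ] H} (hS : IsSymm S)
    {μ r : ℝ} (h : DenseRange (imagShift S μ)) (hr0 : 0 < r) :
    DenseRange (imagShift S (r * μ)) := by
  have hpow : ∀ n : ℕ, DenseRange (imagShift S ((3 / 2 : ℝ) ^ n * μ)) := by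
    intro n
    induction n with
    | zero => simpa using h
    | succ n ih =>
      rw [pow_succ', mul_assoc]
      exact hS.denseRange_imagShift_mul_of_lt_two ih (by norm_num) (by norm_num)
  obtain ⟨n, hn⟩ := pow_unbounded_of_one_lt r (show (1 : ℝ) < 3 / 2 by norm_num)
  have hpos : (0 : ℝ) < (3 / 2 : ℝ) ^ n := by positivity
  have h1 := hS.denseRange_imagShift_mul_of_lt_two (hpow n) (r := r / (3 / 2 : ℝ) ^ n)
    (by positivity) (by rw [div_lt_iff₀ hpos]; linarith)
  rwa [← mul_assoc, div_mul_cancel₀ _ hpos.ne'] at h1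

lemma essSelfAdjoint_iff_denseRange_imagShift {S : D →ₗ[ℂ] H} :
    EssSelfAdjoint D S ↔ DenseRange (imagShift S 1) ∧ DenseRange (imagShift S (-1)) := by
  have h1 : (fun x : D => S x + Complex.I • (x : H)) = imagShift S 1 := by
    funext x
    simp [imagShift_apply]
  have h2 : (fun x : D => S x - Complex.I • (x : H)) = imagShift S (-1) := by
    funext x
    simp [imagShift_apply, sub_eq_add_neg]
  rw [EssSelfAdjoint, h1, h2]
  rfl

lemma IsSymm.denseRange_imagShift [CompleteSpace H] {S : D →ₗ[ℂ] H} (hS : IsSymm S)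
    (h : EssSelfAdjoint D S) {μ : ℝ} (hμ : μ ≠ 0) : DenseRange (imagShift S μ) := by
  rw [essSelfAdjoint_iff_denseRange_imagShift] at h
  rcases hμ.lt_or_gt with hμ | hμ
  · simpa using hS.denseRange_imagShift_mul h.2 (neg_pos.2 hμ)
  · simpa using hS.denseRange_imagShift_mul h.1 hμ

/-- The Kato–Rellich theorem for essential self-adjointness. -/
theorem EssSelfAdjoint.add_of_norm_le [CompleteSpace H] {S V : D →ₗ[ℂ] H} (h : EssSelfAdjoint D S)
    (hS : IsSymm S) (hV : IsSymm V) {a b : ℝ} (ha0 : 0 ≤ a) (ha : a < 1) (hb : 0 ≤ b)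
    (hle : ∀ x : D, ‖V x‖ ≤ a * ‖S x‖ + b * ‖x‖) : EssSelfAdjoint D (S + V) := by
  obtain ⟨l, hl0, hl⟩ : ∃ l : ℝ, 0 < l ∧ a + b / l < 1 := by
    refine ⟨(b + 1) / (1 - a), div_pos (by linarith) (by linarith), ?_⟩
    have h1 : (b / ((b + 1) / (1 - a))) < 1 - a := by
      rw [div_div_eq_mul_div, div_lt_iff₀ (by linarith)]
      nlinarith
    linarith
  have main : ∀ μ : ℝ, |μ| = l → DenseRange (imagShift (S + V) μ) := by
    intro μ hμ
    have hμ0 : μ ≠ 0 := abs_pos.1 (hμ ▸ hl0)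
    have h1 : imagShift (S + V) μ = imagShift S μ + V := by
      simp only [imagShift]
      abel
    rw [h1]
    refine denseRange_add_of_norm_le (hS.denseRange_imagShift h hμ0) hl
      fun x => (hle x).trans ?_
    have h2 := hS.norm_le_norm_imagShift μ x
    have h3 := hS.abs_mul_norm_le_norm_imagShift μ x
    rw [hμ] at h3
    calc a * ‖S x‖ + b * ‖x‖ = a * ‖S x‖ + b / l * (l * ‖x‖) := by field_simp
      _ ≤ a * ‖imagShift S μ x‖ + b / l * ‖imagShift S μ x‖ := by gcongr
      _ = _ := by ring
  rw [essSelfAdjoint_iff_denseRange_imagShift]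
  constructor
  · have := (hS.add hV).denseRange_imagShift_mul (main l (abs_of_pos hl0)) (inv_pos.2 hl0)
    rwa [inv_mul_cancel₀ hl0.ne'] at this
  · have := (hS.add hV).denseRange_imagShift_mul
      (main (-l) (by rw [abs_neg, abs_of_pos hl0])) (inv_pos.2 hl0)
    rwa [mul_neg, inv_mul_cancel₀ hl0.ne'] at this

/-- A lower bound on `Re ⟨Nψ, Tψ⟩` makes `εN` relatively bounded with respect to `T + εN`,
uniformly for bounded `ε`. -/
lemma sq_norm_le_of_re_inner_ge {T N : D →ₗ[ℂ] H} {c : ℝ} (hc : 0 ≤ c)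
    (hlow : ∀ ψ : D, -c * (⟪(ψ : H), N ψ + (ψ : H)⟫_ℂ).re ≤ (⟪N ψ, T ψ⟫_ℂ).re)
    {ε : ℝ} (hε : 0 ≤ ε) (ψ : D) :
    (ε * ‖N ψ‖) ^ 2 ≤
      2 * ‖(T + (ε : ℂ) • N) ψ‖ ^ 2 + (4 * c ^ 2 + 4 * ε * c) * ‖ψ‖ ^ 2 := by
  have h1 := hlow ψ
  have h2 : (⟪(ψ : H), N ψ⟫_ℂ).re ≤ ‖ψ‖ * ‖N ψ‖ := re_inner_le_norm (𝕜 := ℂ) (ψ : H) (N ψ)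
  have h3 : (⟪(ψ : H), (ψ : H)⟫_ℂ).re = ‖ψ‖ ^ 2 :=
    inner_self_eq_norm_sq (𝕜 := ℂ) (ψ : H)
  rw [inner_add_right, Complex.add_re, h3] at h1
  have h4 : ‖(T + (ε : ℂ) • N) ψ‖ ^ 2
      = ‖T ψ‖ ^ 2 + 2 * (ε * (⟪N ψ, T ψ⟫_ℂ).re) + (ε * ‖N ψ‖) ^ 2 := by
    rw [LinearMap.add_apply, LinearMap.smul_apply, @norm_add_sq ℂ, inner_smul_right, norm_smul,
      Complex.norm_real, Real.norm_eq_abs, abs_of_nonneg hε]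
    have : RCLike.re ((ε : ℂ) * ⟪T ψ, N ψ⟫_ℂ) = ε * (⟪N ψ, T ψ⟫_ℂ).re := by
      rw [← inner_conj_symm]
      exact (Complex.re_ofReal_mul _ _).trans (by rw [Complex.conj_re])
    rw [this]
  have h5 : ε * (-c * (‖ψ‖ * ‖N ψ‖ + ‖ψ‖ ^ 2)) ≤ ε * (⟪N ψ, T ψ⟫_ℂ).re := by
    refine mul_le_mul_of_nonneg_left (le_trans ?_ h1) hε
    nlinarith
  nlinarith [sq_nonneg (ε * ‖N ψ‖ - 2 * c * ‖ψ‖), sq_nonneg (‖T ψ‖)]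

/-- Konrady's trick: an operator `T` is essentially self-adjoint if `T + KN` is and
`Re ⟨Nψ, Tψ⟩` is bounded below by `-c ⟨ψ, (N + 1)ψ⟩`. -/
theorem essSelfAdjoint_of_add_smul [CompleteSpace H] (hD : Dense (D : Set H))
    {T N : D →ₗ[ℂ] H} (hT : IsSymm T) (hN : IsSymm N) {c K : ℝ} (hc : 0 ≤ c) (hK : 0 < K)
    (hlow : ∀ ψ : D, -c * (⟪(ψ : H), N ψ + (ψ : H)⟫_ℂ).re ≤ (⟪N ψ, T ψ⟫_ℂ).re)
    (h : EssSelfAdjoint D (T + (K : ℂ) • N)) : EssSelfAdjoint D T := by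
  have halve : ∀ ε : ℝ, 0 ≤ ε → EssSelfAdjoint D (T + (ε : ℂ) • N) →
      EssSelfAdjoint D (T + ((ε / 2 : ℝ) : ℂ) • N) := by
    intro ε hε hess
    have h1 : T + ((ε / 2 : ℝ) : ℂ) • N = (T + (ε : ℂ) • N) + ((-(ε / 2) : ℝ) : ℂ) • N := by
      rw [add_assoc, ← add_smul]
      congr 2
      push_cast
      ring
    rw [h1]
    refine hess.add_of_norm_le (hT.add (hN.real_smul ε)) (hN.real_smul _) (a := 3 / 4)
      (b := Real.sqrt (c ^ 2 + ε * c)) (by norm_num) (by norm_num) (Real.sqrt_nonneg _)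
      fun ψ => ?_
    rw [LinearMap.smul_apply, norm_smul, Complex.norm_real, Real.norm_eq_abs, abs_neg,
      abs_of_nonneg (by positivity : 0 ≤ ε / 2)]
    have h2 := sq_norm_le_of_re_inner_ge hc hlow hε ψ
    have h3 : Real.sqrt (c ^ 2 + ε * c) ^ 2 = c ^ 2 + ε * c := Real.sq_sqrt (by positivity)
    have h4 := Real.sqrt_nonneg (c ^ 2 + ε * c)
    set s := Real.sqrt (c ^ 2 + ε * c)
    set t := ‖(T + (ε : ℂ) • N) ψ‖
    refine le_of_sq_le_sq ?_ (by positivity)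
    have h5 : 0 ≤ t * (s * ‖ψ‖) := by positivity
    have h6 : 4 * c ^ 2 + 4 * ε * c = 4 * s ^ 2 := by rw [h3]; ring
    rw [h6] at h2
    nlinarith [sq_nonneg t]
  have hseq : ∀ n : ℕ, EssSelfAdjoint D (T + ((K / 2 ^ n : ℝ) : ℂ) • N) := by
    intro n
    induction n with
    | zero => simpa using h
    | succ n ih =>
      rw [pow_succ, ← div_div]
      exact halve _ (by positivity) ih
  have main : ∀ μ : ℝ, μ ≠ 0 → DenseRange (imagShift T μ) := by
    intro μ hμ
    apply denseRange_of_orthogonal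
    intro φ hφ
    have hμ_abs : 0 < |μ| := abs_pos.2 hμ
    -- bounds for `ψ` and `εNψ`, uniform in small `ε`, for `(T + εN + iμ)ψ` close to `φ`
    set R : ℝ := ‖φ‖ + 1
    set M : ℝ := Real.sqrt (2 * R ^ 2 + (4 * c ^ 2 + 4 * K * c) * (R / |μ|) ^ 2)
    have hR0 : 0 < R := by positivity
    have hM0 : 0 ≤ M := Real.sqrt_nonneg _
    have key : ∀ δ : ℝ, 0 < δ → δ ≤ 1 → ‖φ‖ ^ 2 ≤ δ * (‖φ‖ + M + R / |μ|) := by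
      intro δ hδ hδ1
      obtain ⟨η, hηD, hη⟩ := hD.exists_dist_lt φ hδ
      obtain ⟨n, hn⟩ := pow_unbounded_of_one_lt (K * ‖N ⟨η, hηD⟩‖ / δ) (one_lt_two (α := ℝ))
      have hp : (0 : ℝ) < 2 ^ n := by positivity
      have hp1 : (1 : ℝ) ≤ 2 ^ n := one_le_pow₀ one_le_two
      set ε : ℝ := K / 2 ^ n with hε
      have hε0 : 0 < ε := by positivity
      have hεK : ε ≤ K := div_le_self hK.le hp1
      have hεη : ε * ‖N ⟨η, hηD⟩‖ ≤ δ := by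
        rw [div_lt_iff₀ hδ] at hn
        rw [hε, div_mul_eq_mul_div, div_le_iff₀ hp]
        linarith
      have hsymm := hT.add (hN.real_smul ε)
      obtain ⟨ψ, hψ⟩ := (hsymm.denseRange_imagShift (hseq n) hμ).exists_dist_lt φ hδ
      rw [dist_eq_norm] at hη hψ
      have hX : ‖imagShift (T + (ε : ℂ) • N) μ ψ‖ ≤ R := by
        have := norm_sub_norm_le (imagShift (T + (ε : ℂ) • N) μ ψ) φ
        rw [norm_sub_rev] at this
        linarith
      have hψR : ‖ψ‖ ≤ R / |μ| := by
        rw [le_div_iff₀ hμ_abs, mul_comm]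
        exact (hsymm.abs_mul_norm_le_norm_imagShift μ ψ).trans hX
      have hNψ : ε * ‖N ψ‖ ≤ M := by
        apply Real.le_sqrt_of_sq_le
        refine (sq_norm_le_of_re_inner_ge hc hlow hε0.le ψ).trans ?_
        have := (hsymm.norm_le_norm_imagShift μ ψ).trans hX
        gcongr
      have hsplit : imagShift (T + (ε : ℂ) • N) μ ψ = imagShift T μ ψ + (ε : ℂ) • N ψ := by
        simp only [imagShift_apply, LinearMap.add_apply, LinearMap.smul_apply]
        abel
      have hdecomp : ⟪φ, φ⟫_ℂ = ⟪φ, φ - imagShift (T + (ε : ℂ) • N) μ ψ⟫_ℂ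
          + (ε : ℂ) * ⟪φ - η, N ψ⟫_ℂ + (ε : ℂ) * ⟪N ⟨η, hηD⟩, (ψ : H)⟫_ℂ := by
        rw [hN ⟨η, hηD⟩ ψ, hsplit, inner_sub_right, inner_add_right, hφ ψ, inner_smul_right,
          inner_sub_left]
        ring
      have hnorm : ‖⟪φ, φ⟫_ℂ‖ = ‖φ‖ ^ 2 := by
        rw [inner_self_eq_norm_sq_to_K]
        simp
      have hεn : ‖(ε : ℂ)‖ = ε := by
        rw [Complex.norm_real, Real.norm_eq_abs, abs_of_pos hε0]
      rw [← hnorm, hdecomp]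
      calc _ ≤ ‖φ‖ * ‖φ - imagShift (T + (ε : ℂ) • N) μ ψ‖ + ε * (‖φ - η‖ * ‖N ψ‖)
            + ε * (‖N ⟨η, hηD⟩‖ * ‖ψ‖) := by
            refine (norm_add₃_le).trans ?_
            rw [norm_mul, norm_mul, hεn]
            gcongr
            · exact norm_inner_le_norm _ _
            · exact norm_inner_le_norm _ _
            · exact norm_inner_le_norm _ (ψ : H)
        _ = ‖φ‖ * ‖φ - imagShift (T + (ε : ℂ) • N) μ ψ‖ + ‖φ - η‖ * (ε * ‖N ψ‖)
            + (ε * ‖N ⟨η, hηD⟩‖) * ‖ψ‖ := by ring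
        _ ≤ ‖φ‖ * δ + δ * M + δ * (R / |μ|) := by gcongr
        _ = _ := by ring
    by_contra hne
    have hφ0 : 0 < ‖φ‖ ^ 2 := by positivity
    set L : ℝ := ‖φ‖ + M + R / |μ|
    have hL0 : 0 < L := by positivity
    have h1 := key (min 1 (‖φ‖ ^ 2 / (2 * L))) (lt_min one_pos (by positivity)) (min_le_left _ _)
    have h2 : min 1 (‖φ‖ ^ 2 / (2 * L)) * L ≤ ‖φ‖ ^ 2 / (2 * L) * L := by
      gcongr
      exact min_le_right _ _
    have h3 : ‖φ‖ ^ 2 / (2 * L) * L = ‖φ‖ ^ 2 / 2 := by field_simp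
    linarith
  exact essSelfAdjoint_iff_denseRange_imagShift.2
    ⟨main 1 one_ne_zero, main (-1) (neg_ne_zero.2 one_ne_zero)⟩

end DenseRange

/-- **Konrady's trick in Fock space** (Theorem 3.5 of the paper).  On the Hilbert direct sum
`H = ⊕ₙ Hₙ`, let `A = ⊕ₙ Aₙ` with each `Aₙ` positive and essentially self-adjoint on a dense
domain `Dₙ ⊆ Hₙ`, let `N` be the number operator, and let `B` be symmetric on the algebraic
direct sum `D` with `‖Bψ‖ ≤ d‖Nψ‖ + d‖ψ‖` and `Re⟨Nψ, (A+B)ψ⟩ ≥ -c⟨ψ, (N+I)ψ⟩`.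
Then `A + B` is essentially self-adjoint on `D`. -/
theorem konrady_fock
    {G : ℕ → Type*} [∀ n, NormedAddCommGroup (G n)] [∀ n, InnerProductSpace ℂ (G n)]
    [∀ n, CompleteSpace (G n)]
    (Dn : ∀ n, Submodule ℂ (G n)) (hDn : ∀ n, Dense ((Dn n : Set (G n))))
    (An : ∀ n, (Dn n) →ₗ[ℂ] G n)
    (hAnsym : ∀ n, ∀ x y : Dn n, ⟪An n x, (y : G n)⟫_ℂ = ⟪(x : G n), An n y⟫_ℂ)
    (hAnpos : ∀ n, ∀ x : Dn n, 0 ≤ (⟪(x : G n), An n x⟫_ℂ).re)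
    (hAnsa : ∀ n, EssSelfAdjoint (Dn n) (An n))
    (D : Submodule ℂ (lp G 2))
    (hD : ∀ ψ : lp G 2,
      ψ ∈ D ↔ {n : ℕ | ψ n ≠ 0}.Finite ∧ ∀ n, ψ n ∈ Dn n)
    (A N B : D →ₗ[ℂ] lp G 2)
    (hA : ∀ (ψ : D) (n : ℕ) (h : (ψ : lp G 2) n ∈ Dn n),
      (A ψ : lp G 2) n = An n ⟨(ψ : lp G 2) n, h⟩)
    (hN : ∀ (ψ : D) (n : ℕ), (N ψ : lp G 2) n = (n : ℂ) • (ψ : lp G 2) n)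
    (hBsym : ∀ x y : D, ⟪B x, (y : lp G 2)⟫_ℂ = ⟪(x : lp G 2), B y⟫_ℂ)
    (c d : ℝ) (hc : 0 ≤ c) (hd : 0 ≤ d)
    (hbound : ∀ ψ : D, ‖B ψ‖ ≤ d * ‖N ψ‖ + d * ‖ψ‖)
    (hlow : ∀ ψ : D,
      -c * (⟪(ψ : lp G 2), N ψ + (ψ : lp G 2)⟫_ℂ).re ≤ (⟪N ψ, A ψ + B ψ⟫_ℂ).re) :
    EssSelfAdjoint D (A + B) := by
  have hmem : ∀ (ψ : D) n, (ψ : lp G 2) n ∈ Dn n := fun ψ => ((hD ψ).1 ψ.2).2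
  have hAapply : ∀ (ψ : D) n, (A ψ : lp G 2) n = An n ⟨(ψ : lp G 2) n, hmem ψ n⟩ :=
    fun ψ n => hA ψ n (hmem ψ n)
  have hsingle : ∀ n (x : Dn n), lp.single 2 n (x : G n) ∈ D := by
    intro n x
    rw [hD]
    refine ⟨(Set.finite_singleton n).subset fun m hm => ?_, fun m => ?_⟩
    · by_contra hmn
      exact hm (lp.single_apply_ne 2 n (x : G n) hmn)
    · rcases eq_or_ne m n with rfl | hmn
      · rw [lp.single_apply_self]
        exact x.2
      · rw [lp.single_apply_ne 2 n (x : G n) hmn]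
        exact zero_mem _
  have hDdense : Dense (D : Set (lp G 2)) := by
    have h1 : DenseRange D.subtype := by
      refine denseRange_of_orthogonal _ fun φ hφ => lp.ext (funext fun n => ?_)
      refine (hDn n).eq_zero_of_inner_left ℂ fun x hx => ?_
      have h2 := hφ ⟨_, hsingle n ⟨x, hx⟩⟩
      rwa [Submodule.subtype_apply, lp.inner_single_right] at h2
    simpa [DenseRange] using h1
  have hNsymm : IsSymm N := by
    intro x y
    rw [lp.inner_eq_tsum, lp.inner_eq_tsum]
    refine tsum_congr fun n => ?_
    rw [hN, hN, inner_smul_left, inner_smul_right, Complex.conj_natCast]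
  have hAsymm : IsSymm A := by
    intro x y
    rw [lp.inner_eq_tsum, lp.inner_eq_tsum]
    refine tsum_congr fun n => ?_
    rw [hAapply, hAapply]
    exact hAnsym n ⟨_, hmem x n⟩ ⟨_, hmem y n⟩
  have hNA : ∀ ψ : D, 0 ≤ (⟪N ψ, A ψ⟫_ℂ).re := by
    intro ψ
    have h1 := Complex.hasSum_re (lp.hasSum_inner (𝕜 := ℂ) (N ψ) (A ψ))
    refine h1.nonneg fun n => ?_
    rw [hN, hAapply, inner_smul_left, Complex.conj_natCast, ← Complex.ofReal_natCast,
      Complex.re_ofReal_mul]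
    exact mul_nonneg n.cast_nonneg (hAnpos n ⟨_, hmem ψ n⟩)
  -- `A + KN` is essentially self-adjoint, since each `Aₙ + Kn` is
  have hAN : ∀ K : ℝ, EssSelfAdjoint D (A + (K : ℂ) • N) := by
    intro K
    have hcomp : ∀ n : ℕ, IsSymm (((K * n : ℝ) : ℂ) • (Dn n).subtype) ∧
        EssSelfAdjoint (Dn n) (An n + ((K * n : ℝ) : ℂ) • (Dn n).subtype) := by
      intro n
      have hs : IsSymm (((K * n : ℝ) : ℂ) • (Dn n).subtype) :=
        IsSymm.real_smul (fun _ _ => rfl) _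
      refine ⟨hs, (hAnsa n).add_of_norm_le (hAnsym n) hs le_rfl one_pos (abs_nonneg (K * n))
        fun x => ?_⟩
      rw [LinearMap.smul_apply, norm_smul, Complex.norm_real, zero_mul, zero_add]
      rfl
    have main : ∀ μ : ℝ, μ ≠ 0 → DenseRange (imagShift (A + (K : ℂ) • N) μ) := by
      intro μ hμ
      refine denseRange_of_orthogonal _ fun φ hφ => lp.ext (funext fun n => ?_)
      have hdense := IsSymm.denseRange_imagShift
        (IsSymm.add (hAnsym n) (hcomp n).1) (hcomp n).2 hμ
      refine hdense.eq_zero_of_inner_left ℂ fun x => ?_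
      have h2 := hφ ⟨_, hsingle n x⟩
      have h3 : imagShift (A + (K : ℂ) • N) μ ⟨_, hsingle n x⟩
          = lp.single 2 n (imagShift (An n + ((K * n : ℝ) : ℂ) • (Dn n).subtype) μ x) := by
        refine lp.ext (funext fun m => ?_)
        rcases eq_or_ne m n with rfl | hmn
        · refine Eq.trans ?_ (lp.single_apply_self 2 m _).symm
          simp only [imagShift_apply, LinearMap.add_apply, LinearMap.smul_apply, lp.coeFn_add,
            lp.coeFn_smul, Pi.add_apply, Pi.smul_apply, hN, hAapply]
          simp [mul_smul]
        · refine Eq.trans ?_ (lp.single_apply_ne 2 n _ hmn).symm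
          have h0 : (⟨(lp.single 2 n (x : G n) : lp G 2) m, hmem ⟨_, hsingle n x⟩ m⟩ : Dn m) = 0 :=
            Subtype.ext (lp.single_apply_ne 2 n (x : G n) hmn)
          simp only [imagShift_apply, LinearMap.add_apply, LinearMap.smul_apply, lp.coeFn_add,
            lp.coeFn_smul, Pi.add_apply, Pi.smul_apply, hN, hAapply]
          rw [h0]
          simp [Pi.single_eq_of_ne hmn]
      rwa [h3, lp.inner_single_right] at h2
    exact essSelfAdjoint_iff_denseRange_imagShift.2
      ⟨main 1 one_ne_zero, main (-1) (neg_ne_zero.2 one_ne_zero)⟩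
  have hK : 0 < 2 * d + 1 := by positivity
  refine essSelfAdjoint_of_add_smul hDdense (hAsymm.add hBsym) hNsymm hc hK hlow ?_
  rw [add_right_comm]
  refine (hAN _).add_of_norm_le (hAsymm.add (hNsymm.real_smul _)) hBsym (a := 1 / 2)
    (by norm_num) (by norm_num) hd fun ψ => (hbound ψ).trans ?_
  have h1 : (2 * d + 1) * ‖N ψ‖ ≤ ‖(A + ((2 * d + 1 : ℝ) : ℂ) • N) ψ‖ := by
    refine le_of_sq_le_sq ?_ (norm_nonneg _)
    rw [LinearMap.add_apply, LinearMap.smul_apply, add_comm (A ψ), @norm_add_sq ℂ, inner_smul_left,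
      norm_smul, Complex.norm_real, Real.norm_eq_abs, abs_of_pos hK, Complex.conj_ofReal]
    have h2 : 0 ≤ RCLike.re (((2 * d + 1 : ℝ) : ℂ) * ⟪N ψ, A ψ⟫_ℂ) := by
      change 0 ≤ Complex.re _
      rw [Complex.re_ofReal_mul]
      exact mul_nonneg hK.le (hNA ψ)
    nlinarith [sq_nonneg ‖A ψ‖]
  have h2 := norm_nonneg (N ψ)
  linarith
end

section
/- Let T₁ and T₂ be self-adjoint operators on a complex Hilbert space H with a common core D, and suppose that 0 ≤ ⟨ψ, T₁ψ⟩ ≤ ⟨ψ, T₂ψ⟩ for all ψ ∈ D. Then the bounded inverses R_i := (T_i + I)^{-1} (which exist for i = 1, 2) satisfy 0 ≤ ⟨x, R₂ x⟩ ≤ ⟨x, R₁ x⟩ for every x ∈ H; that is, (T₁ + I)^{-1} ≥ (T₂ + I)^{-1} ≥ 0 as bounded self-adjoint operators. -/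
open scoped InnerProductSpace ComplexOrder

namespace LinearPMap

variable {H : Type*} [NormedAddCommGroup H] [InnerProductSpace ℂ H]

/-- A closed condition on pairs `(x, T x)` extends from a core of a closed operator to its whole
domain. -/
theorem IsClosed.forall_of_core {T : H →ₗ.[ℂ] H} (hT : T.IsClosed) {D : Submodule ℂ H}
    (hD : D ≤ T.domain) (hcore : (T.domRestrict D).closure = T) {P : H × H → Prop}
    (hP : _root_.IsClosed {p | P p}) (h : ∀ (ψ : H) (hψ : ψ ∈ D), P (ψ, T ⟨ψ, hD hψ⟩))
    (x : T.domain) : P (x, T x) := by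
  have hc : (T.domRestrict D).IsClosable := hT.isClosable.leIsClosable domRestrict_le
  have hx : ((x : H), T x) ∈ (T.domRestrict D).graph.topologicalClosure := by
    rw [hc.graph_closure_eq_closure_graph, hcore]
    exact T.mem_graph x
  refine closure_minimal (t := {p | P p}) ?_ hP hx
  rintro p hp
  obtain ⟨y, hy, hy'⟩ := (mem_graph_iff _).1 hp
  have hyD : (y : H) ∈ D := y.2.1
  have hval : T.domRestrict D y = T ⟨y, hD hyD⟩ := domRestrict_apply rfl
  have hpe : p = ((y : H), T ⟨y, hD hyD⟩) := Prod.ext hy.symm (hy'.symm.trans hval)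
  rw [hpe]
  exact h y hyD

theorem norm_le_norm_apply_add {T : H →ₗ.[ℂ] H} (hpos : ∀ x : T.domain, 0 ≤ ⟪(x : H), T x⟫_ℂ)
    (x : T.domain) : ‖(x : H)‖ ≤ ‖T x + (x : H)‖ := by
  have hre : 0 ≤ (⟪(x : H), T x⟫_ℂ).re := (Complex.le_def.1 (hpos x)).1
  have hself : (⟪(x : H), (x : H)⟫_ℂ).re = ‖(x : H)‖ ^ 2 :=
    (norm_sq_eq_re_inner (𝕜 := ℂ) (x : H)).symm
  have hcs : (⟪(x : H), T x + (x : H)⟫_ℂ).re ≤ ‖(x : H)‖ * ‖T x + (x : H)‖ :=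
    re_inner_le_norm (𝕜 := ℂ) _ _
  rw [inner_add_right, Complex.add_re, hself] at hcs
  by_contra! hlt
  nlinarith [norm_nonneg (T x + (x : H))]

variable [CompleteSpace H]

theorem inner_apply_left_of_isSelfAdjoint {T : H →ₗ.[ℂ] H} (hT : IsSelfAdjoint T)
    (x y : T.domain) : ⟪T x, (y : H)⟫_ℂ = ⟪(x : H), T y⟫_ℂ := by
  have h := adjoint_isFormalAdjoint hT.dense_domain
  rw [isSelfAdjoint_def.1 hT] at h
  exact h x y

theorem eq_zero_of_inner_apply_add_eq_zero {T : H →ₗ.[ℂ] H} (hT : IsSelfAdjoint T)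
    (hpos : ∀ x : T.domain, 0 ≤ ⟪(x : H), T x⟫_ℂ) {z : H}
    (hz : ∀ x : T.domain, ⟪z, T x + (x : H)⟫_ℂ = 0) : z = 0 := by
  have hw : ∀ x : T.domain, ⟪-z, (x : H)⟫_ℂ = ⟪z, T x⟫_ℂ := fun x => by
    have := hz x
    rw [inner_add_right] at this
    rw [inner_neg_left]
    linear_combination -this
  have hmem : z ∈ T†.domain := mem_adjoint_domain_of_exists z ⟨-z, hw⟩
  rw [isSelfAdjoint_def.1 hT] at hmem
  have hzz := norm_le_norm_apply_add hpos ⟨z, hmem⟩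
  have hTz : T ⟨z, hmem⟩ + z = 0 := by
    refine hT.dense_domain.eq_zero_of_inner_left (𝕜 := ℂ) fun x hx => ?_
    rw [inner_add_left, inner_apply_left_of_isSelfAdjoint hT ⟨z, hmem⟩ ⟨x, hx⟩,
      ← inner_add_right, hz ⟨x, hx⟩]
  simpa [hTz] using hzz

theorem inner_self_apply_add_nonneg {T : H →ₗ.[ℂ] H} (hT : IsSelfAdjoint T)
    (hpos : ∀ x : T.domain, 0 ≤ ⟪(x : H), T x⟫_ℂ) (x : T.domain) :
    0 ≤ ⟪T x + (x : H), (x : H)⟫_ℂ := by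
  rw [inner_add_left, inner_apply_left_of_isSelfAdjoint hT]
  refine add_nonneg (hpos x) ?_
  rw [inner_self_eq_norm_sq_to_K, ← RCLike.ofReal_pow]
  exact Complex.zero_le_real.2 (sq_nonneg _)

/-- The variational inequality for the quadratic form of `T + I`. -/
theorem two_mul_re_inner_le {T : H →ₗ.[ℂ] H} (hT : IsSelfAdjoint T)
    (hpos : ∀ x : T.domain, 0 ≤ ⟪(x : H), T x⟫_ℂ) (v w : T.domain) :
    2 * (⟪T v + (v : H), (w : H)⟫_ℂ).re ≤
      (⟪T w + (w : H), (w : H)⟫_ℂ).re + (⟪T v + (v : H), (v : H)⟫_ℂ).re := by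
  have h := (Complex.le_def.1 (inner_self_apply_add_nonneg hT hpos (w - v))).1
  have hTs : (⟪T w, (v : H)⟫_ℂ).re = (⟪T v, (w : H)⟫_ℂ).re := by
    rw [inner_apply_left_of_isSelfAdjoint hT]
    exact inner_re_symm (𝕜 := ℂ) _ _
  have hs : (⟪(w : H), (v : H)⟫_ℂ).re = (⟪(v : H), (w : H)⟫_ℂ).re := inner_re_symm (𝕜 := ℂ) _ _
  simp only [LinearPMap.map_sub, AddSubgroupClass.coe_sub, inner_add_left, inner_sub_left,
    inner_sub_right, Complex.add_re, Complex.sub_re, Complex.zero_re] at h ⊢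
  linarith

/-- A nonnegative self-adjoint operator `T` has a bounded everywhere-defined inverse of
`T + I`. -/
theorem exists_resolvent {T : H →ₗ.[ℂ] H} (hT : IsSelfAdjoint T)
    (hpos : ∀ x : T.domain, 0 ≤ ⟪(x : H), T x⟫_ℂ) :
    ∃ R : H →L[ℂ] H, (∀ y : H, ∃ h : R y ∈ T.domain, T ⟨R y, h⟩ + R y = y) ∧
      ∀ x : T.domain, R (T x + (x : H)) = (x : H) := by
  have : CompleteSpace T.graph := hT.isClosed.completeSpace_coe
  let f : T.graph →L[ℂ] H :=
    (ContinuousLinearMap.snd ℂ H H + ContinuousLinearMap.fst ℂ H H).comp T.graph.subtypeL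
  have hf : ∀ p : T.graph, f p = (p : H × H).2 + (p : H × H).1 := fun p => rfl
  have hbound : ∀ p : T.graph, ‖p‖ ≤ (2 : NNReal) * ‖f p‖ := by
    rintro ⟨⟨a, b⟩, hp⟩
    obtain ⟨x, rfl, rfl⟩ := (mem_graph_iff _).1 hp
    have hx := norm_le_norm_apply_add hpos x
    have hTx : ‖T x‖ ≤ ‖T x + (x : H)‖ + ‖(x : H)‖ := by
      simpa using norm_sub_le (T x + (x : H)) (x : H)
    rw [hf]
    change max ‖(x : H)‖ ‖T x‖ ≤ 2 * ‖T x + (x : H)‖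
    exact max_le (by linarith [norm_nonneg (T x + (x : H))]) (by linarith)
  have hanti : AntilipschitzWith 2 f := f.antilipschitz_of_bound hbound
  have hker : f.ker = ⊥ := LinearMap.ker_eq_bot.2 hanti.injective
  have hrange : f.range = ⊤ := by
    have hclosed : _root_.IsClosed (f.range : Set H) := hanti.isClosed_range f.uniformContinuous
    have : CompleteSpace f.range := hclosed.completeSpace_coe
    rw [← Submodule.orthogonal_eq_bot_iff, Submodule.eq_bot_iff]
    intro z hz
    refine eq_zero_of_inner_apply_add_eq_zero hT hpos fun x => ?_
    exact (Submodule.mem_orthogonal' _ _).1 hz _ ⟨⟨_, T.mem_graph x⟩, rfl⟩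
  let e := ContinuousLinearEquiv.ofBijective f hker hrange
  have he : ∀ p : T.graph, e p = (p : H × H).2 + (p : H × H).1 := fun p => rfl
  refine ⟨(ContinuousLinearMap.fst ℂ H H).comp (T.graph.subtypeL.comp (e.symm : H →L[ℂ] T.graph)),
    fun y => ?_, fun x => ?_⟩
  · obtain ⟨x, hx, hTx⟩ := (mem_graph_iff _).1 (e.symm y).2
    have hy := he (e.symm y)
    rw [e.apply_symm_apply, ← hTx, ← hx] at hy
    change ∃ h : (e.symm y : H × H).1 ∈ T.domain, T ⟨_, h⟩ + (e.symm y : H × H).1 = y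
    simp only [← hx]
    exact ⟨x.2, hy.symm⟩
  · change (e.symm (T x + (x : H)) : H × H).1 = x
    rw [← he ⟨_, T.mem_graph x⟩, e.symm_apply_apply]

end LinearPMap

open LinearPMap

/-- **Lemma 3.6 of the paper.**  If `T₂ ≥ T₁ ≥ 0` are self-adjoint operators with a common core
`D`, then the bounded everywhere-defined inverses `Rᵢ = (Tᵢ + I)⁻¹` exist and satisfy
`(T₁ + I)⁻¹ ≥ (T₂ + I)⁻¹ ≥ 0`. -/
theorem resolvent_monotone
    {H : Type*} [NormedAddCommGroup H] [InnerProductSpace ℂ H] [CompleteSpace H]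
    (T₁ T₂ : H →ₗ.[ℂ] H) (h1 : IsSelfAdjoint T₁) (h2 : IsSelfAdjoint T₂)
    (D : Submodule ℂ H) (hD1 : D ≤ T₁.domain) (hD2 : D ≤ T₂.domain)
    (hcore1 : (T₁.domRestrict D).closure = T₁) (hcore2 : (T₂.domRestrict D).closure = T₂)
    (hpos : ∀ (ψ : H) (hψ : ψ ∈ D), 0 ≤ ⟪ψ, T₁ ⟨ψ, hD1 hψ⟩⟫_ℂ)
    (hmono : ∀ (ψ : H) (hψ : ψ ∈ D), ⟪ψ, T₁ ⟨ψ, hD1 hψ⟩⟫_ℂ ≤ ⟪ψ, T₂ ⟨ψ, hD2 hψ⟩⟫_ℂ) :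
    ∃ R₁ R₂ : H →L[ℂ] H,
      (∀ y : H, ∃ h : R₁ y ∈ T₁.domain, T₁ ⟨R₁ y, h⟩ + R₁ y = y) ∧
      (∀ y : H, ∃ h : R₂ y ∈ T₂.domain, T₂ ⟨R₂ y, h⟩ + R₂ y = y) ∧
      (∀ x : T₁.domain, R₁ (T₁ x + (x : H)) = (x : H)) ∧
      (∀ x : T₂.domain, R₂ (T₂ x + (x : H)) = (x : H)) ∧
      (∀ x : H, 0 ≤ ⟪x, R₂ x⟫_ℂ ∧ ⟪x, R₂ x⟫_ℂ ≤ ⟪x, R₁ x⟫_ℂ) := by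
  have hpos1 : ∀ x : T₁.domain, 0 ≤ ⟪(x : H), T₁ x⟫_ℂ :=
    h1.isClosed.forall_of_core hD1 hcore1 (P := fun p => 0 ≤ ⟪p.1, p.2⟫_ℂ)
      (isClosed_le (by fun_prop) (by fun_prop)) hpos
  have hpos2 : ∀ x : T₂.domain, 0 ≤ ⟪(x : H), T₂ x⟫_ℂ :=
    h2.isClosed.forall_of_core hD2 hcore2 (P := fun p => 0 ≤ ⟪p.1, p.2⟫_ℂ)
      (isClosed_le (by fun_prop) (by fun_prop)) fun ψ hψ => (hpos ψ hψ).trans (hmono ψ hψ)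
  obtain ⟨R₁, hR₁, hR₁'⟩ := exists_resolvent h1 hpos1
  obtain ⟨R₂, hR₂, hR₂'⟩ := exists_resolvent h2 hpos2
  refine ⟨R₁, R₂, hR₁, hR₂, hR₁', hR₂', fun y => ?_⟩
  obtain ⟨hu, hTu⟩ := hR₂ y
  obtain ⟨hv, hTv⟩ := hR₁ y
  have hnonneg1 := inner_self_apply_add_nonneg h1 hpos1 ⟨R₁ y, hv⟩
  have hnonneg2 := inner_self_apply_add_nonneg h2 hpos2 ⟨R₂ y, hu⟩
  simp only [hTu, hTv] at hnonneg1 hnonneg2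
  refine ⟨hnonneg2, ?_⟩
  have key := h2.isClosed.forall_of_core hD2 hcore2
    (P := fun p => 2 * (⟪y, p.1⟫_ℂ).re ≤ (⟪p.2 + p.1, p.1⟫_ℂ).re + (⟪y, R₁ y⟫_ℂ).re)
    (isClosed_le (by fun_prop) (by fun_prop)) (fun ψ hψ => ?_) ⟨R₂ y, hu⟩
  · simp only [hTu] at key
    rw [Complex.le_def] at hnonneg1 hnonneg2 ⊢
    exact ⟨by linarith, hnonneg2.2.symm.trans hnonneg1.2⟩
  · have hvar := two_mul_re_inner_le h1 hpos1 ⟨R₁ y, hv⟩ ⟨ψ, hD1 hψ⟩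
    simp only [hTv] at hvar
    have hm := (Complex.le_def.1 (hmono ψ hψ)).1
    rw [← inner_apply_left_of_isSelfAdjoint h1 ⟨ψ, hD1 hψ⟩ ⟨ψ, hD1 hψ⟩,
      ← inner_apply_left_of_isSelfAdjoint h2 ⟨ψ, hD2 hψ⟩ ⟨ψ, hD2 hψ⟩] at hm
    simp only [inner_add_left, Complex.add_re] at hvar ⊢
    linarith
end

section
/- Let (T_n)_{n∈ℕ} be a sequence of self-adjoint operators on a complex Hilbert space H with a common core D, such that 0 ≤ ⟨ψ, T_nψ⟩ ≤ ⟨ψ, T_{n+1}ψ⟩ for all n and all ψ ∈ D, and such that for every ψ ∈ D the sequence T_nψ converges in H; define Tψ := lim_n T_nψ for ψ ∈ D. Then there exists a self-adjoint operator T' on H extending T (i.e. D ⊆ dom T' and T'ψ = Tψ for ψ ∈ D) such that T_n → T' in the strong resolvent sense: for every λ ∈ ℂ ∖ ℝ and every x ∈ H, (T_n + λI)^{-1}x → (T' + λI)^{-1}x. -/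
open scoped InnerProductSpace ComplexOrder
open Filter

namespace LinearPMap

variable {H : Type*} [NormedAddCommGroup H] [InnerProductSpace ℂ H]

theorem inner_apply_left_of_isSelfAdjoint_s5 [CompleteSpace H] {A : H →ₗ.[ℂ] H} (hA : IsSelfAdjoint A)
    (u v : A.domain) :
    ⟪A u, (v : H)⟫_ℂ = ⟪(u : H), A v⟫_ℂ := by
  have h := adjoint_isFormalAdjoint hA.dense_domain
  rw [isSelfAdjoint_def.mp hA] at h
  exact h u v

/-- If `A` is self-adjoint, `A + l` is bounded below and `A + conj l` is injective, then `A + l`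
is surjective. -/
theorem exists_add_smul_eq [CompleteSpace H] {A : H →ₗ.[ℂ] H} (hA : IsSelfAdjoint A)
    {l : ℂ} {c : ℝ} (hc : 0 < c)
    (hbelow : ∀ u : A.domain, c * ‖(u : H)‖ ≤ ‖A u + l • (u : H)‖)
    (hinj : ∀ u : A.domain, A u + (starRingEnd ℂ l) • (u : H) = 0 → (u : H) = 0) (x : H) :
    ∃ u : A.domain, A u + l • (u : H) = x := by
  set f : A.domain →ₗ[ℂ] H := A.toFun + l • A.domain.subtype
  have hfa : ∀ u, f u = A u + l • (u : H) := fun u => rfl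
  have hclosed : _root_.IsClosed (LinearMap.range f : Set H) := by
    rw [← isSeqClosed_iff_isClosed]
    intro y p hy hp
    choose u hu using hy
    have hcau : CauchySeq fun n => (u n : H) := by
      rw [Metric.cauchySeq_iff]
      intro ε hε
      obtain ⟨N, hN⟩ := Metric.cauchySeq_iff.mp hp.cauchySeq (c * ε) (by positivity)
      refine ⟨N, fun m hm n hn => ?_⟩
      have h1 := hN m hm n hn
      have h2 := hbelow (u m - u n)
      rw [← hfa, _root_.map_sub, hu, hu, ← dist_eq_norm] at h2
      rw [dist_eq_norm]
      exact lt_of_mul_lt_mul_left (h2.trans_lt h1) hc.le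
    obtain ⟨v, hv⟩ := cauchySeq_tendsto_of_complete hcau
    have hlim : Tendsto (fun n => ((u n : H), A (u n))) atTop (nhds (v, p - l • v)) := by
      refine hv.prodMk_nhds ?_
      have := hp.sub (hv.const_smul l)
      refine this.congr fun n => ?_
      rw [← hu n, hfa]
      abel
    have hmem := hA.isClosed.mem_of_tendsto hlim
      (Eventually.of_forall fun n => A.mem_graph (u n))
    obtain ⟨w, hw1, hw2⟩ := (mem_graph_iff A).mp hmem
    refine ⟨w, ?_⟩
    rw [hfa, hw2, hw1]
    simp
  have hbot : (LinearMap.range f)ᗮ = ⊥ := by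
    rw [Submodule.eq_bot_iff]
    intro y hy
    rw [Submodule.mem_orthogonal'] at hy
    have hw : ∀ u : A.domain, ⟪-(starRingEnd ℂ l) • y, (u : H)⟫_ℂ = ⟪y, A u⟫_ℂ := by
      intro u
      have := hy (f u) ⟨u, rfl⟩
      rw [hfa, inner_add_right, inner_smul_right] at this
      rw [neg_smul, inner_neg_left, inner_smul_left, RingHomCompTriple.comp_apply, RingHom.id_apply]
      linear_combination -this
    have hmem := mem_adjoint_domain_of_exists y ⟨_, hw⟩
    have happ := adjoint_apply_eq hA.dense_domain ⟨y, hmem⟩ hw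
    have heq : ∃ h : y ∈ A.domain, A ⟨y, h⟩ = -(starRingEnd ℂ l) • y := by
      rw [isSelfAdjoint_def] at hA
      have : ∃ h : y ∈ A.adjoint.domain, A.adjoint ⟨y, h⟩ = -(starRingEnd ℂ l) • y :=
        ⟨hmem, happ⟩
      rwa [hA] at this
    obtain ⟨h, heq⟩ := heq
    exact hinj ⟨y, h⟩ (by rw [heq]; simp)
  have htop : LinearMap.range f = ⊤ := by
    have : CompleteSpace (LinearMap.range f) := hclosed.completeSpace_coe
    exact (Submodule.orthogonal_eq_bot_iff).mp hbot
  exact LinearMap.range_eq_top.mp htop x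

theorem abs_im_mul_norm_le [CompleteSpace H] {A : H →ₗ.[ℂ] H} (hA : IsSelfAdjoint A)
    (l : ℂ) (u : A.domain) :
    |l.im| * ‖(u : H)‖ ≤ ‖A u + l • (u : H)‖ := by
  have hreal : (⟪(u : H), A u⟫_ℂ).im = 0 := by
    rw [← Complex.conj_eq_iff_im, inner_conj_symm, inner_apply_left_of_isSelfAdjoint_s5 hA]
  have him : (⟪(u : H), A u + l • (u : H)⟫_ℂ).im = l.im * ‖(u : H)‖ ^ 2 := by
    rw [inner_add_right, inner_smul_right, inner_self_eq_norm_sq_to_K, Complex.add_im, hreal]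
    simp [← Complex.ofReal_pow]
  have hle := (Complex.abs_im_le_norm _).trans (norm_inner_le_norm (𝕜 := ℂ) (u : H)
    (A u + l • (u : H)))
  rw [him, abs_mul, abs_of_nonneg (sq_nonneg ‖(u : H)‖)] at hle
  rcases (norm_nonneg (u : H)).eq_or_lt with h | h
  · simp [← h]
  · refine le_of_mul_le_mul_left ?_ h
    linarith

theorem norm_le_norm_add_of_nonneg {A : H →ₗ.[ℂ] H} (u : A.domain)
    (h : 0 ≤ (⟪(u : H), A u⟫_ℂ).re) : ‖(u : H)‖ ≤ ‖A u + (u : H)‖ := by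
  have hle := (Complex.re_le_norm _).trans (norm_inner_le_norm (𝕜 := ℂ) (u : H) (A u + (u : H)))
  rw [inner_add_right, inner_self_eq_norm_sq_to_K, Complex.add_re] at hle
  simp only [Complex.coe_algebraMap, ← Complex.ofReal_pow, Complex.ofReal_re] at hle
  rcases (norm_nonneg (u : H)).eq_or_lt with h' | h'
  · simp [← h']
  · refine le_of_mul_le_mul_left ?_ h'
    linarith

/-- The resolvent `(A + 1)⁻¹` of a nonnegative self-adjoint operator. -/
theorem exists_resolvent_of_nonneg [CompleteSpace H] {A : H →ₗ.[ℂ] H} (hA : IsSelfAdjoint A)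
    (hpos : ∀ u : A.domain, 0 ≤ (⟪(u : H), A u⟫_ℂ).re) :
    ∃ R : H →L[ℂ] H, (∀ x, ∃ h : R x ∈ A.domain, A ⟨R x, h⟩ + R x = x) ∧
      (∀ u : A.domain, R (A u + u) = u) ∧ (∀ x, ‖R x‖ ≤ ‖x‖) ∧ 0 ≤ R ∧ R ≤ 1 := by
  set f : A.domain →ₗ[ℂ] H := A.toFun + A.domain.subtype
  have hfa : ∀ u, f u = A u + (u : H) := fun u => rfl
  have hbelow : ∀ u : A.domain, ‖(u : H)‖ ≤ ‖f u‖ := fun u =>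
    norm_le_norm_add_of_nonneg u (hpos u)
  have hzero : ∀ u : A.domain, f u = 0 → (u : H) = 0 := fun u hu => by
    simpa [hu] using hbelow u
  have hbij : Function.Bijective f := by
    constructor
    · rw [injective_iff_map_eq_zero]
      exact fun u hu => Subtype.ext (hzero u hu)
    · intro x
      obtain ⟨u, hu⟩ := exists_add_smul_eq hA (l := 1) one_pos
        (fun u => by simpa [hfa] using hbelow u) (fun u hu => hzero u (by simpa [hfa] using hu)) x
      exact ⟨u, by simpa [hfa] using hu⟩
  set e := LinearEquiv.ofBijective f hbij
  have hfe : ∀ x, f (e.symm x) = x := e.apply_symm_apply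
  have hef : ∀ u, e.symm (f u) = u := e.symm_apply_apply
  have hnorm : ∀ x, ‖(e.symm x : H)‖ ≤ ‖x‖ := fun x => by
    simpa only [hfe] using hbelow (e.symm x)
  set R : H →L[ℂ] H := (A.domain.subtype ∘ₗ e.symm.toLinearMap).mkContinuous 1
    (fun x => by simpa using hnorm x)
  have hR : ∀ x, R x = e.symm x := fun x => rfl
  have hsymm : (R : H →ₗ[ℂ] H).IsSymmetric := by
    intro x y
    change ⟪(e.symm x : H), y⟫_ℂ = ⟪x, (e.symm y : H)⟫_ℂ
    conv_lhs => rw [← hfe y]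
    conv_rhs => rw [← hfe x]
    rw [hfa, hfa, inner_add_left, inner_add_right, inner_apply_left_of_isSelfAdjoint_s5 hA]
  have hinner : ∀ x, ⟪R x, x⟫_ℂ = ⟪(e.symm x : H), A (e.symm x)⟫_ℂ + ⟪R x, R x⟫_ℂ := fun x => by
    conv_lhs => rw [← hfe x]
    rw [hfa, inner_add_right, ← hfa, hfe, hR]
  refine ⟨R, fun x => ⟨(e.symm x).2, hfe x⟩, fun u => ?_, hnorm, ?_, ?_⟩
  · rw [hR, ← hfa, hef]
  · rw [ContinuousLinearMap.nonneg_iff_isPositive]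
    refine ⟨hsymm, fun x => ?_⟩
    change 0 ≤ (⟪R x, x⟫_ℂ).re
    rw [hinner, Complex.add_re]
    exact add_nonneg (hpos _) (inner_self_nonneg (𝕜 := ℂ))
  · rw [ContinuousLinearMap.le_def]
    refine ⟨LinearMap.IsSymmetric.id.sub hsymm, fun x => ?_⟩
    change 0 ≤ (⟪x - R x, x⟫_ℂ).re
    rw [inner_sub_left, Complex.sub_re, sub_nonneg]
    calc (⟪R x, x⟫_ℂ).re ≤ ‖R x‖ * ‖x‖ := re_inner_le_norm (𝕜 := ℂ) _ _
      _ ≤ ‖x‖ * ‖x‖ := by gcongr; exact hnorm x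
      _ = (⟪x, x⟫_ℂ).re := (inner_self_eq_norm_mul_norm (𝕜 := ℂ) x).symm

/-- The operator `R⁻¹ - 1` associated with an injective bounded operator `R`. -/
noncomputable def invSubOne (R : H →L[ℂ] H) (hR : Function.Injective R) : H →ₗ.[ℂ] H where
  domain := LinearMap.range (R : H →ₗ[ℂ] H)
  toFun := (LinearEquiv.ofInjective (R : H →ₗ[ℂ] H) hR).symm.toLinearMap -
    (LinearMap.range (R : H →ₗ[ℂ] H)).subtype

theorem apply_mem_domain_invSubOne (R : H →L[ℂ] H) (hR : Function.Injective R) (x : H) :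
    R x ∈ (invSubOne R hR).domain :=
  ⟨x, rfl⟩

theorem invSubOne_apply (R : H →L[ℂ] H) (hR : Function.Injective R) (x : H)
    (h : R x ∈ (invSubOne R hR).domain) : invSubOne R hR ⟨R x, h⟩ = x - R x := by
  change (LinearEquiv.ofInjective (R : H →ₗ[ℂ] H) hR).symm ⟨R x, h⟩ - R x = _
  congr 1
  rw [LinearEquiv.symm_apply_eq]
  rfl

theorem isSelfAdjoint_invSubOne [CompleteSpace H] (R : H →L[ℂ] H)
    (hR : Function.Injective R) (hsymm : (R : H →ₗ[ℂ] H).IsSymmetric) (hdense : DenseRange R) :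
    IsSelfAdjoint (invSubOne R hR) := by
  have hsymm' : ∀ x y, ⟪R x, y⟫_ℂ = ⟪x, R y⟫_ℂ := hsymm
  have hd : Dense ((invSubOne R hR).domain : Set H) := by
    have : ((invSubOne R hR).domain : Set H) = Set.range R := LinearMap.coe_range _
    rw [this]
    exact hdense
  have hformal : (invSubOne R hR).IsFormalAdjoint (invSubOne R hR) := by
    rintro ⟨_, x, rfl⟩ ⟨_, y, rfl⟩
    change ⟪invSubOne R hR ⟨R x, apply_mem_domain_invSubOne R hR x⟩, R y⟫_ℂ =
      ⟪R x, invSubOne R hR ⟨R y, apply_mem_domain_invSubOne R hR y⟩⟫_ℂ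
    rw [invSubOne_apply, invSubOne_apply, inner_sub_left, inner_sub_right, hsymm' x y]
  have hle := hformal.le_adjoint hd
  rw [isSelfAdjoint_def]
  refine (eq_of_le_of_domain_eq hle (le_antisymm hle.1 fun y hy => ?_)).symm
  refine ⟨(invSubOne R hR).adjoint ⟨y, hy⟩ + y, ?_⟩
  refine ext_inner_right ℂ fun x => ?_
  have h := adjoint_isFormalAdjoint hd ⟨y, hy⟩ ⟨R x, apply_mem_domain_invSubOne R hR x⟩
  rw [invSubOne_apply, inner_sub_right] at h
  change ⟪R _, x⟫_ℂ = _
  rw [hsymm', inner_add_left]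
  change ⟪(invSubOne R hR).adjoint ⟨y, hy⟩, R x⟫_ℂ = ⟪y, x⟫_ℂ - ⟪y, R x⟫_ℂ at h
  rw [h]
  ring

theorem exists_seq_of_closure_domRestrict_eq [CompleteSpace H] {A : H →ₗ.[ℂ] H}
    (hA : IsSelfAdjoint A) {D : Submodule ℂ H} (hD : D ≤ A.domain)
    (hcore : (A.domRestrict D).closure = A)
    (u : A.domain) :
    ∃ (ψ : ℕ → H) (hψ : ∀ k, ψ k ∈ D), Tendsto ψ atTop (nhds u) ∧
      Tendsto (fun k => A ⟨ψ k, hD (hψ k)⟩) atTop (nhds (A u)) := by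
  have hcl : (A.domRestrict D).IsClosable := hA.isClosed.isClosable.leIsClosable domRestrict_le
  have hmem : ((u : H), A u) ∈ (A.domRestrict D).graph.topologicalClosure := by
    rw [hcl.graph_closure_eq_closure_graph, hcore]
    exact A.mem_graph u
  obtain ⟨p, hp, hlim⟩ := mem_closure_iff_seq_limit.mp hmem
  choose w hw1 hw2 using fun k => (mem_graph_iff _).mp (hp k)
  have hwD : ∀ k, (p k).1 ∈ D := fun k => hw1 k ▸ (w k).2.1
  refine ⟨fun k => (p k).1, hwD, (continuous_fst.tendsto _).comp hlim, ?_⟩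
  refine ((continuous_snd.tendsto _).comp hlim).congr fun k => ?_
  rw [Function.comp_apply, ← hw2 k]
  exact domRestrict_apply (hw1 k)

/-- If `0 ≤ A ≤ B` as forms on a core of `B`, then `(B + 1)⁻¹ ≤ (A + 1)⁻¹`. -/
theorem resolvent_le_resolvent [CompleteSpace H] {A B : H →ₗ.[ℂ] H} (hA : IsSelfAdjoint A)
    (hB : IsSelfAdjoint B) (hpos : ∀ u : A.domain, 0 ≤ (⟪(u : H), A u⟫_ℂ).re)
    {D : Submodule ℂ H} (hDA : D ≤ A.domain) (hDB : D ≤ B.domain)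
    (hcore : (B.domRestrict D).closure = B)
    (hAB : ∀ ψ (hψ : ψ ∈ D), (⟪ψ, A ⟨ψ, hDA hψ⟩⟫_ℂ).re ≤ (⟪ψ, B ⟨ψ, hDB hψ⟩⟫_ℂ).re)
    {R S : H →L[ℂ] H} (hR : ∀ x, ∃ h : R x ∈ A.domain, A ⟨R x, h⟩ + R x = x)
    (hS : ∀ x, ∃ h : S x ∈ B.domain, B ⟨S x, h⟩ + S x = x) (hR0 : 0 ≤ R) (hS0 : 0 ≤ S) :
    S ≤ R := by
  rw [ContinuousLinearMap.nonneg_iff_isPositive] at hR0 hS0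
  rw [ContinuousLinearMap.le_def]
  refine ⟨hR0.isSymmetric.sub hS0.isSymmetric, fun x => ?_⟩
  change 0 ≤ (⟪R x - S x, x⟫_ℂ).re
  rw [inner_sub_left, Complex.sub_re, sub_nonneg]
  obtain ⟨hu, hux⟩ := hR x
  obtain ⟨hv, hvx⟩ := hS x
  have hkey : ∀ ψ (hψ : ψ ∈ D), 2 * (⟪x, ψ⟫_ℂ).re ≤
      (⟪R x, x⟫_ℂ).re + (⟪ψ, B ⟨ψ, hDB hψ⟩ + ψ⟫_ℂ).re := by
    intro ψ hψ
    have h1 := hpos (⟨R x, hu⟩ - ⟨ψ, hDA hψ⟩)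
    have h2 : 0 ≤ (⟪R x - ψ, R x - ψ⟫_ℂ).re := inner_self_nonneg (𝕜 := ℂ)
    have h3 : (⟪R x, A ⟨ψ, hDA hψ⟩⟫_ℂ).re = (⟪A ⟨R x, hu⟩, ψ⟫_ℂ).re :=
      congrArg Complex.re (inner_apply_left_of_isSelfAdjoint_s5 hA ⟨R x, hu⟩ ⟨ψ, hDA hψ⟩).symm
    have h4 : (⟪ψ, A ⟨R x, hu⟩⟫_ℂ).re = (⟪A ⟨R x, hu⟩, ψ⟫_ℂ).re := inner_re_symm (𝕜 := ℂ) _ _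
    have h5 : (⟪ψ, R x⟫_ℂ).re = (⟪R x, ψ⟫_ℂ).re := inner_re_symm (𝕜 := ℂ) _ _
    have h6 := hAB ψ hψ
    have h7 : (⟪x, ψ⟫_ℂ).re = (⟪A ⟨R x, hu⟩, ψ⟫_ℂ).re + (⟪R x, ψ⟫_ℂ).re := by
      conv_lhs => rw [← hux]
      rw [inner_add_left, Complex.add_re]
    have h8 : (⟪R x, x⟫_ℂ).re = (⟪R x, A ⟨R x, hu⟩⟫_ℂ).re + (⟪R x, R x⟫_ℂ).re := by
      rw [← Complex.add_re, ← inner_add_right, hux]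
    rw [map_sub, AddSubgroupClass.coe_sub] at h1
    simp only [inner_sub_left, inner_sub_right, Complex.sub_re] at h1 h2
    rw [inner_add_right, Complex.add_re]
    linarith
  obtain ⟨ψ, hψ, hlim, hlimB⟩ := exists_seq_of_closure_domRestrict_eq hB hDB hcore ⟨S x, hv⟩
  have hl : Tendsto (fun k => 2 * (⟪x, ψ k⟫_ℂ).re) atTop (nhds (2 * (⟪x, S x⟫_ℂ).re)) :=
    ((Complex.continuous_re.tendsto _).comp (tendsto_const_nhds.inner hlim)).const_mul 2
  have hr := ((Complex.continuous_re.tendsto _).comp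
    (hlim.inner (hlimB.add hlim))).const_add (⟪R x, x⟫_ℂ).re
  have hfinal := le_of_tendsto_of_tendsto' hl hr fun k => hkey (ψ k) (hψ k)
  change _ ≤ (⟪R x, x⟫_ℂ).re + (⟪S x, B ⟨S x, hv⟩ + S x⟫_ℂ).re at hfinal
  rw [hvx] at hfinal
  have hsymm : (⟪x, S x⟫_ℂ).re = (⟪S x, x⟫_ℂ).re := inner_re_symm (𝕜 := ℂ) _ _
  linarith

end LinearPMap

namespace ContinuousLinearMap

variable {H : Type*} [NormedAddCommGroup H] [InnerProductSpace ℂ H]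

theorem norm_apply_sq_le_re_inner {A : H →L[ℂ] H} (h0 : 0 ≤ A) (h1 : A ≤ 1) (x : H) :
    ‖A x‖ ^ 2 ≤ (⟪A x, x⟫_ℂ).re := by
  rw [nonneg_iff_isPositive] at h0
  have ha : 0 ≤ (⟪A (x - A x), x - A x⟫_ℂ).re := h0.re_inner_nonneg_left _
  have hb : 0 ≤ (⟪A x - A (A x), A x⟫_ℂ).re := ((le_def _ _).mp h1).re_inner_nonneg_left (A x)
  have hs : ⟪A (A x), x⟫_ℂ = ⟪A x, A x⟫_ℂ := h0.inner_left_eq_inner_right _ _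
  have hn : (⟪A x, A x⟫_ℂ).re = ‖A x‖ ^ 2 := inner_self_eq_norm_sq (𝕜 := ℂ) (A x)
  simp only [map_sub, inner_sub_left, inner_sub_right, Complex.sub_re, hs, hn] at ha hb
  linarith

/-- A decreasing sequence of operators between `0` and `1` converges strongly. -/
theorem exists_tendsto_apply_of_antitone [CompleteSpace H] {R : ℕ → H →L[ℂ] H} (hR : Antitone R)
    (h0 : ∀ n, 0 ≤ R n) (h1 : ∀ n, R n ≤ 1) :
    ∃ S : H →L[ℂ] H, (S : H →ₗ[ℂ] H).IsSymmetric ∧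
      ∀ x, Tendsto (fun n => R n x) atTop (nhds (S x)) := by
  have hdiff : ∀ x {m n}, m ≤ n →
      ‖R m x - R n x‖ ^ 2 ≤ (⟪R m x, x⟫_ℂ).re - (⟪R n x, x⟫_ℂ).re := by
    intro x m n hmn
    have := norm_apply_sq_le_re_inner (A := R m - R n) (sub_nonneg.mpr (hR hmn))
      ((sub_le_self _ (h0 n)).trans (h1 m)) x
    simpa only [sub_apply, inner_sub_left, Complex.sub_re] using this
  have hlim : ∀ x, ∃ y, Tendsto (fun n => R n x) atTop (nhds y) := by
    intro x
    have hanti : Antitone fun n => (⟪R n x, x⟫_ℂ).re := fun m n hmn =>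
      sub_nonneg.mp ((sq_nonneg _).trans (hdiff x hmn))
    have hbdd : BddBelow (Set.range fun n => (⟪R n x, x⟫_ℂ).re) := by
      refine ⟨0, ?_⟩
      rintro _ ⟨n, rfl⟩
      exact ((nonneg_iff_isPositive _).mp (h0 n)).re_inner_nonneg_left x
    have hcau := (tendsto_atTop_ciInf hanti hbdd).cauchySeq
    refine cauchySeq_tendsto_of_complete (Metric.cauchySeq_iff'.mpr fun ε hε => ?_)
    obtain ⟨N, hN⟩ := Metric.cauchySeq_iff'.mp hcau (ε ^ 2) (by positivity)
    refine ⟨N, fun n hn => ?_⟩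
    have h := hN n hn
    rw [dist_comm, Real.dist_eq] at h
    rw [dist_comm, dist_eq_norm]
    exact lt_of_pow_lt_pow_left₀ 2 hε.le (((hdiff x hn).trans (le_abs_self _)).trans_lt h)
  choose S hS using hlim
  refine ⟨continuousLinearMapOfTendsto R (f := S) (tendsto_pi_nhds.mpr hS), ?_, hS⟩
  intro x y
  refine tendsto_nhds_unique ((hS x).inner tendsto_const_nhds) ?_
  refine (tendsto_const_nhds.inner (hS y)).congr fun n => ?_
  exact (((nonneg_iff_isPositive _).mp (h0 n)).inner_left_eq_inner_right x y).symm

end ContinuousLinearMap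

/-- **Monotone Graph Limit Theorem** (Theorem 3.7 of the paper).  Let `(Tₙ)` be self-adjoint
operators with a common core `D`, `0 ≤ Tₙ ≤ Tₙ₊₁` on `D`, and suppose `Tₙψ` converges for every
`ψ ∈ D`.  Then there is a self-adjoint operator `T'` extending the strong limit `T` on `D`, such
that `Tₙ → T'` in the strong resolvent sense: for every non-real `λ` and every `x ∈ H`, the
solutions `uₙ` of `(Tₙ + λ)uₙ = x` converge to the solution `v` of `(T' + λ)v = x`. -/
theorem monotone_graph_limit
    {H : Type*} [NormedAddCommGroup H] [InnerProductSpace ℂ H] [CompleteSpace H]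
    (T : ℕ → H →ₗ.[ℂ] H) (hsa : ∀ n, IsSelfAdjoint (T n))
    (D : Submodule ℂ H) (hD : ∀ n, D ≤ (T n).domain)
    (hcore : ∀ n, ((T n).domRestrict D).closure = T n)
    (hpos : ∀ n (ψ : H) (hψ : ψ ∈ D), 0 ≤ ⟪ψ, T n ⟨ψ, hD n hψ⟩⟫_ℂ)
    (hmono : ∀ n (ψ : H) (hψ : ψ ∈ D),
      ⟪ψ, T n ⟨ψ, hD n hψ⟩⟫_ℂ ≤ ⟪ψ, T (n + 1) ⟨ψ, hD (n + 1) hψ⟩⟫_ℂ)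
    (hconv : ∀ (ψ : H) (hψ : ψ ∈ D),
      ∃ L : H, Tendsto (fun n => T n ⟨ψ, hD n hψ⟩) atTop (nhds L)) :
    ∃ T' : H →ₗ.[ℂ] H, IsSelfAdjoint T' ∧
      ∃ hle : D ≤ T'.domain,
        (∀ (ψ : H) (hψ : ψ ∈ D),
          Tendsto (fun n => T n ⟨ψ, hD n hψ⟩) atTop (nhds (T' ⟨ψ, hle hψ⟩))) ∧
        (∀ (l : ℂ), l.im ≠ 0 → ∀ x : H,
          ∃ (u : ℕ → H) (v : H),
            (∀ n, ∃ h : u n ∈ (T n).domain, T n ⟨u n, h⟩ + l • u n = x) ∧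
            (∃ h : v ∈ T'.domain, T' ⟨v, h⟩ + l • v = x) ∧
            Tendsto u atTop (nhds v)) := by
  have hre : ∀ n (u : (T n).domain), 0 ≤ (⟪(u : H), T n u⟫_ℂ).re := by
    intro n u
    obtain ⟨ψ, hψ, hlim, hlimT⟩ :=
      LinearPMap.exists_seq_of_closure_domRestrict_eq (hsa n) (hD n) (hcore n) u
    exact ge_of_tendsto' ((Complex.continuous_re.tendsto _).comp (hlim.inner hlimT))
      fun k => (Complex.le_def.mp (hpos n (ψ k) (hψ k))).1
  choose R hR hRinv hRnorm hR0 hR1 using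
    fun n => LinearPMap.exists_resolvent_of_nonneg (hsa n) (hre n)
  have hanti : Antitone R := antitone_nat_of_succ_le fun n =>
    LinearPMap.resolvent_le_resolvent (hsa n) (hsa (n + 1)) (hre n) (hD n) (hD (n + 1))
      (hcore (n + 1)) (fun ψ hψ => (Complex.le_def.mp (hmono n ψ hψ)).1) (hR n) (hR (n + 1))
      (hR0 n) (hR0 (n + 1))
  obtain ⟨S, hSsymm, hS⟩ := ContinuousLinearMap.exists_tendsto_apply_of_antitone hanti hR0 hR1
  have hSsymm' : ∀ x y, ⟪S x, y⟫_ℂ = ⟪x, S y⟫_ℂ := hSsymm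
  have hSD : ∀ (ψ : H) (hψ : ψ ∈ D) (L : H),
      Tendsto (fun n => T n ⟨ψ, hD n hψ⟩) atTop (nhds L) → S (L + ψ) = ψ := by
    intro ψ hψ L hL
    have hzero : Tendsto (fun n => R n (L - T n ⟨ψ, hD n hψ⟩)) atTop (nhds 0) := by
      refine squeeze_zero_norm (fun n => hRnorm n _) ?_
      simpa using (tendsto_const_nhds.sub hL : Tendsto _ _ (nhds (L - L))).norm
    have hsum := (hS (L + ψ)).sub hzero
    rw [sub_zero] at hsum
    refine tendsto_nhds_unique hsum (tendsto_const_nhds.congr fun n => ?_)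
    rw [← map_sub, show L + ψ - (L - T n ⟨ψ, hD n hψ⟩) = T n ⟨ψ, hD n hψ⟩ + ψ by abel]
    exact (hRinv n ⟨ψ, hD n hψ⟩).symm
  have hDrange : (D : Set H) ⊆ Set.range S := fun ψ hψ =>
    let ⟨L, hL⟩ := hconv ψ hψ
    ⟨L + ψ, hSD ψ hψ L hL⟩
  have hDdense : Dense (D : Set H) := by
    refine dense_iff_closure_eq.mpr (Set.eq_univ_of_univ_subset ?_)
    rw [← (hsa 0).dense_domain.closure_eq]
    refine closure_minimal (fun u hu => ?_) isClosed_closure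
    obtain ⟨ψ, hψ, hlim, -⟩ :=
      LinearPMap.exists_seq_of_closure_domRestrict_eq (hsa 0) (hD 0) (hcore 0) ⟨u, hu⟩
    exact mem_closure_of_tendsto hlim (Eventually.of_forall hψ)
  have hSdense : DenseRange S := hDdense.mono hDrange
  have hSinj : Function.Injective S := by
    rw [injective_iff_map_eq_zero]
    intro x hx
    refine hSdense.eq_zero_of_inner_left ℂ ?_
    intro y
    rw [← hSsymm', hx, inner_zero_left]
  have hT' := LinearPMap.isSelfAdjoint_invSubOne S hSinj hSsymm hSdense
  refine ⟨LinearPMap.invSubOne S hSinj, hT', hDrange, fun ψ hψ => ?_, fun l hl x => ?_⟩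
  · obtain ⟨L, hL⟩ := hconv ψ hψ
    have hψS := hSD ψ hψ L hL
    have happ := LinearPMap.invSubOne_apply S hSinj (L + ψ)
      (LinearPMap.apply_mem_domain_invSubOne S hSinj _)
    simp only [hψS, add_sub_cancel_right] at happ
    rwa [happ]
  · have hsurj : ∀ {A : H →ₗ.[ℂ] H}, IsSelfAdjoint A → ∃ u : A.domain, A u + l • (u : H) = x := by
      intro A hA
      refine LinearPMap.exists_add_smul_eq hA (abs_pos.mpr hl)
        (LinearPMap.abs_im_mul_norm_le hA l) (fun u hu => ?_) x
      have h := LinearPMap.abs_im_mul_norm_le hA (starRingEnd ℂ l) u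
      rw [hu, norm_zero, Complex.conj_im, abs_neg] at h
      exact norm_le_zero_iff.mp (nonpos_of_mul_nonpos_right h (abs_pos.mpr hl))
    choose u hu using fun n => hsurj (hsa n)
    obtain ⟨⟨_, y, rfl⟩, hv⟩ := hsurj hT'
    refine ⟨fun n => u n, S y, fun n => ⟨(u n).2, hu n⟩,
      ⟨LinearPMap.apply_mem_domain_invSubOne S hSinj y, hv⟩, ?_⟩
    have hx : y - S y + l • S y = x := by
      rw [← hv, ← LinearPMap.invSubOne_apply S hSinj y
        (LinearPMap.apply_mem_domain_invSubOne S hSinj y)]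
      rfl
    have hbound : ∀ n, ‖(u n : H) - R n y‖ ≤
        |l.im|⁻¹ * ‖x - (y - R n y + l • R n y)‖ := by
      intro n
      obtain ⟨hmem, hRy⟩ := hR n y
      have h := LinearPMap.abs_im_mul_norm_le (hsa n) l (u n - ⟨R n y, hmem⟩)
      rw [LinearPMap.map_sub, AddSubgroupClass.coe_sub, smul_sub, eq_sub_of_add_eq hRy,
        ← hu n] at *
      rw [inv_mul_eq_div, le_div_iff₀' (abs_pos.mpr hl)]
      refine h.trans_eq (congrArg norm ?_)
      abel
    have hlim : Tendsto (fun n => |l.im|⁻¹ * ‖x - (y - R n y + l • R n y)‖) atTop (nhds 0) := by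
      have := ((tendsto_const_nhds (x := x)).sub
        (((tendsto_const_nhds (x := y)).sub (hS y)).add ((hS y).const_smul l))).norm.const_mul
          |l.im|⁻¹
      simpa only [hx, sub_self, norm_zero, mul_zero] using this
    simpa using (squeeze_zero_norm hbound hlim).add (hS y)
end

section
/- Let (H_n)_{n∈ℕ} be complex Hilbert spaces, H their Hilbert direct sum, L^(n) ⊆ H the closed subspace of sequences ψ with ψ_m = 0 for all m > n, and ℱ ⊆ H the algebraic direct sum (sequences with only finitely many nonzero entries). Let O : ℱ → ℱ be a linear operator and c > 0 a constant such that for every n: O(ℱ ∩ L^(n)) ⊆ L^(n+2) and ‖Oψ‖ ≤ c(n+2)‖ψ‖ for all ψ ∈ ℱ ∩ L^(n). Then every vector of ℱ is an analytic vector for O; and if in addition O is symmetric, then O with domain ℱ is essentially self-adjoint. -/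
open scoped InnerProductSpace

section Truncation

variable {G : ℕ → Type*} [∀ n, NormedAddCommGroup (G n)]

/-- The truncation of a sequence to its entries of index at most `n`. -/
noncomputable def lpTruncate (φ : lp G 2) (n : ℕ) : lp G 2 :=
  ∑ m ∈ Finset.range (n + 1), lp.single 2 m (φ m)

theorem lpTruncate_apply (φ : lp G 2) (n m : ℕ) :
    lpTruncate φ n m = if m ≤ n then φ m else 0 := by
  have h : lpTruncate φ n m = ∑ k ∈ Finset.range (n + 1), (lp.single 2 k (φ k) : lp G 2) m := by
    simp only [lpTruncate, lp.coeFn_sum, Finset.sum_apply]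
  rw [h]
  split_ifs with hm
  · rw [Finset.sum_eq_single m]
    · simp
    · intro k _ hk
      exact Pi.single_eq_of_ne hk.symm _
    · intro hmem
      exact absurd (Finset.mem_range.2 (Nat.lt_succ_of_le hm)) hmem
  · refine Finset.sum_eq_zero fun k hk => Pi.single_eq_of_ne ?_ _
    rw [Finset.mem_range] at hk
    omega

theorem lpTruncate_apply_of_lt (φ : lp G 2) (n : ℕ) : ∀ m > n, lpTruncate φ n m = 0 := by
  intro m hm
  rw [lpTruncate_apply, if_neg (not_le.2 hm)]

theorem eq_zero_of_lpTruncate_eq_zero {φ : lp G 2} (h : ∀ n, lpTruncate φ n = 0) : φ = 0 := by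
  ext m
  have hm := lpTruncate_apply φ m m
  rw [h m, if_pos le_rfl] at hm
  exact hm.symm

variable [∀ n, InnerProductSpace ℂ (G n)]

theorem lp_inner_congr {x y x' y' : lp G 2} (h : ∀ m, ⟪x m, y m⟫_ℂ = ⟪x' m, y' m⟫_ℂ) :
    ⟪x, y⟫_ℂ = ⟪x', y'⟫_ℂ := by
  rw [lp.inner_eq_tsum, lp.inner_eq_tsum]
  exact tsum_congr h

theorem inner_lpTruncate_right (x φ : lp G 2) (n : ℕ) (hx : ∀ m > n, x m = 0) :
    ⟪x, lpTruncate φ n⟫_ℂ = ⟪x, φ⟫_ℂ := by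
  refine lp_inner_congr fun m => ?_
  rw [lpTruncate_apply]
  split_ifs with hm
  · rfl
  · simp [hx m (not_le.1 hm)]

theorem inner_lpTruncate_self (φ : lp G 2) (n : ℕ) :
    ⟪lpTruncate φ n, φ⟫_ℂ = ((‖lpTruncate φ n‖ ^ 2 : ℝ) : ℂ) := by
  rw [← inner_lpTruncate_right _ _ n (lpTruncate_apply_of_lt φ n), inner_self_eq_norm_sq_to_K]
  simp

theorem norm_sub_sq_of_inner_eq {E : Type*} [NormedAddCommGroup E] [InnerProductSpace ℂ E]
    {x y : E} (h : ⟪y, x⟫_ℂ = ⟪y, y⟫_ℂ) : ‖x - y‖ ^ 2 = ‖x‖ ^ 2 - ‖y‖ ^ 2 := by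
  have hre : RCLike.re ⟪x, y⟫_ℂ = ‖y‖ ^ 2 := by
    rw [inner_re_symm, h, inner_self_eq_norm_sq]
  rw [norm_sub_sq (𝕜 := ℂ), hre]
  ring

theorem norm_lpTruncate_sub_sq (φ : lp G 2) {n k : ℕ} (hnk : n ≤ k) :
    ‖lpTruncate φ k - lpTruncate φ n‖ ^ 2 = ‖lpTruncate φ k‖ ^ 2 - ‖lpTruncate φ n‖ ^ 2 := by
  refine norm_sub_sq_of_inner_eq ?_
  rw [inner_lpTruncate_right _ _ n (lpTruncate_apply_of_lt φ n), inner_lpTruncate_right _ _ k]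
  exact fun m hm => lpTruncate_apply_of_lt φ n m (lt_of_le_of_lt hnk hm)

theorem norm_lpTruncate_sq_mono (φ : lp G 2) : Monotone fun n => ‖lpTruncate φ n‖ ^ 2 := by
  intro n k hnk
  have h := norm_lpTruncate_sub_sq φ hnk
  have h0 := sq_nonneg ‖lpTruncate φ k - lpTruncate φ n‖
  simp only
  linarith

theorem norm_lpTruncate_sq_le (φ : lp G 2) (n : ℕ) : ‖lpTruncate φ n‖ ^ 2 ≤ ‖φ‖ ^ 2 := by
  have h : ‖φ - lpTruncate φ n‖ ^ 2 = ‖φ‖ ^ 2 - ‖lpTruncate φ n‖ ^ 2 :=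
    norm_sub_sq_of_inner_eq (inner_lpTruncate_right _ _ n (lpTruncate_apply_of_lt φ n)).symm
  have h0 := sq_nonneg ‖φ - lpTruncate φ n‖
  linarith

end Truncation

/-- A bounded monotone nonnegative sequence whose values are controlled by `n` times its
increments vanishes, because the harmonic series diverges. -/
theorem eq_zero_of_le_mul_increment {s : ℕ → ℝ} {B c : ℝ} (hc : 0 < c) (hs0 : ∀ n, 0 ≤ s n)
    (hmono : Monotone s) (hB : ∀ n, s n ≤ B)
    (h : ∀ n : ℕ, s (n + 2) ≤ c * (n + 4) * (s (n + 4) - s n)) (N : ℕ) : s N = 0 := by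
  by_contra hN
  have hpos : 0 < s N := lt_of_le_of_ne (hs0 N) (Ne.symm hN)
  let t : ℕ → ℝ := fun k => s (N + 4 * k)
  have hsum : Summable fun k => t (k + 1) - t k := by
    refine summable_of_sum_range_le (c := B) (fun k => sub_nonneg.2 (hmono (by omega))) fun n => ?_
    rw [Finset.sum_range_sub]
    have h1 := hB (N + 4 * n)
    have h2 := hs0 (N + 4 * 0)
    simp only [t]
    linarith
  have hlower : ∀ k : ℕ, s N / (c * (N + 4)) * (1 / ((k + 1 : ℕ) : ℝ)) ≤ t (k + 1) - t k := by
    intro k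
    have h1 := h (N + 4 * k)
    have h2 : s N ≤ s (N + 4 * k + 2) := hmono (by omega)
    have h3 : 0 ≤ t (k + 1) - t k := sub_nonneg.2 (hmono (by omega))
    have h4 : t (k + 1) - t k = s (N + 4 * k + 4) - s (N + 4 * k) := by
      simp only [t, mul_add, mul_one, add_assoc]
    rw [← h4] at h1
    rw [div_mul_div_comm, mul_one, div_le_iff₀ (by positivity)]
    have h5 : c * (((N + 4 * k : ℕ) : ℝ) + 4) ≤ c * (N + 4) * ((k + 1 : ℕ) : ℝ) := by
      have h6 : (0 : ℝ) ≤ c * (N * k) := by positivity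
      push_cast
      nlinarith
    have h7 := mul_le_mul_of_nonneg_right h5 h3
    linarith
  have hharm : Summable fun k : ℕ => s N / (c * (N + 4)) * (1 / ((k + 1 : ℕ) : ℝ)) :=
    Summable.of_nonneg_of_le (fun k => by positivity) hlower hsum
  rw [summable_mul_left_iff (by positivity)] at hharm
  exact Real.not_summable_one_div_natCast
    ((summable_nat_add_iff (f := fun k : ℕ => 1 / (k : ℝ)) 1).1 hharm)

theorem dense_range_of_inner_eq_zero {E : Type*} [NormedAddCommGroup E] [InnerProductSpace ℂ E]
    [CompleteSpace E] {D : Type*} [AddCommGroup D] [Module ℂ D] (T : D →ₗ[ℂ] E)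
    (h : ∀ φ : E, (∀ x, ⟪T x, φ⟫_ℂ = 0) → φ = 0) : Dense (Set.range T) := by
  rw [← LinearMap.coe_range, Submodule.dense_iff_topologicalClosure_eq_top,
    Submodule.topologicalClosure_eq_top_iff, Submodule.eq_bot_iff]
  intro φ hφ
  exact h φ fun x => (Submodule.mem_orthogonal _ φ).1 hφ _ (LinearMap.mem_range_self T x)

section GradedOperator

variable {G : ℕ → Type*} [∀ n, NormedAddCommGroup (G n)] [∀ n, InnerProductSpace ℂ (G n)]
  {F : Submodule ℂ (lp G 2)} {O : F →ₗ[ℂ] F} {c : ℝ}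

theorem norm_pow_apply_le_of_graded (hc : 0 < c)
    (hgrade : ∀ (n : ℕ) (ψ : F), (∀ m > n, (ψ : lp G 2) m = 0) →
      ∀ m > n + 2, ((O ψ : F) : lp G 2) m = 0)
    (hnorm : ∀ (n : ℕ) (ψ : F), (∀ m > n, (ψ : lp G 2) m = 0) →
      ‖((O ψ : F) : lp G 2)‖ ≤ c * (n + 2) * ‖(ψ : lp G 2)‖)
    {v : F} {N : ℕ} (hv : ∀ m > N, (v : lp G 2) m = 0) (n : ℕ) :
    (∀ m > N + 2 * n, (((O ^ n) v : F) : lp G 2) m = 0) ∧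
      ‖(((O ^ n) v : F) : lp G 2)‖ ≤
        (c * (N + 2)) ^ n * (Nat.factorial n : ℝ) * ‖(v : lp G 2)‖ := by
  induction n with
  | zero => simpa using hv
  | succ n ih =>
    obtain ⟨ihg, ihn⟩ := ih
    rw [pow_succ', Module.End.mul_apply]
    refine ⟨fun m hm => hgrade (N + 2 * n) _ ihg m (by omega), ?_⟩
    refine (hnorm (N + 2 * n) _ ihg).trans ?_
    have h1 : c * (((N + 2 * n : ℕ) : ℝ) + 2) ≤ c * (N + 2) * (n + 1) := by
      have h2 : (0 : ℝ) ≤ c * (N * n) := by positivity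
      push_cast
      nlinarith
    refine (mul_le_mul h1 ihn (norm_nonneg _) (by positivity)).trans_eq ?_
    rw [Nat.factorial_succ]
    push_cast
    ring

theorem eq_zero_of_inner_graded_add_smul_eq_zero
    (hF : ∀ ψ : lp G 2, ψ ∈ F ↔ {n : ℕ | ψ n ≠ 0}.Finite) (hc : 0 < c)
    (hgrade : ∀ (n : ℕ) (ψ : F), (∀ m > n, (ψ : lp G 2) m = 0) →
      ∀ m > n + 2, ((O ψ : F) : lp G 2) m = 0)
    (hnorm : ∀ (n : ℕ) (ψ : F), (∀ m > n, (ψ : lp G 2) m = 0) →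
      ‖((O ψ : F) : lp G 2)‖ ≤ c * (n + 2) * ‖(ψ : lp G 2)‖)
    (hsymm : ∀ x y : F,
      ⟪((O x : F) : lp G 2), (y : lp G 2)⟫_ℂ = ⟪(x : lp G 2), ((O y : F) : lp G 2)⟫_ℂ)
    {z : ℂ} (hz : |z.im| = 1) {φ : lp G 2}
    (hφ : ∀ x : F, ⟪((O x : F) : lp G 2) + z • (x : lp G 2), φ⟫_ℂ = 0) : φ = 0 := by
  have hmem : ∀ n, lpTruncate φ n ∈ F := fun n =>
    (hF _).2 ((Set.finite_Iic n).subset fun m hm => by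
      by_contra hmn
      exact hm (lpTruncate_apply_of_lt φ n m (not_le.1 hmn)))
  let p : ℕ → F := fun n => ⟨lpTruncate φ n, hmem n⟩
  have hp : ∀ n, ∀ m > n, (p n : lp G 2) m = 0 := lpTruncate_apply_of_lt φ
  have hOp : ∀ n, ∀ m > n + 2, ((O (p n) : F) : lp G 2) m = 0 := fun n => hgrade n _ (hp n)
  have hkey : ∀ n : ℕ, ‖lpTruncate φ (n + 2)‖ ^ 2 ≤
      c * (n + 4) * (‖lpTruncate φ (n + 4)‖ ^ 2 - ‖lpTruncate φ n‖ ^ 2) := by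
    intro n
    set q : F := p (n + 2) with hq
    set d : lp G 2 := lpTruncate φ (n + 4) - lpTruncate φ (n + 2) with hd
    set e : lp G 2 := lpTruncate φ (n + 2) - lpTruncate φ n with he
    have hlow : ⟪((O (p n) : F) : lp G 2), d⟫_ℂ = 0 := by
      rw [hd, inner_sub_right, inner_lpTruncate_right _ _ (n + 2) (hOp n),
        inner_lpTruncate_right _ _ (n + 4) fun m hm => hOp n m (by omega), sub_self]
    have hsplit : ⟪((O q : F) : lp G 2), φ⟫_ℂ =
        ⟪((O q : F) : lp G 2), (q : lp G 2)⟫_ℂ + ⟪((O (q - p n) : F) : lp G 2), d⟫_ℂ := by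
      rw [map_sub, Submodule.coe_sub, inner_sub_left, hlow, sub_zero, ← inner_add_right,
        ← inner_lpTruncate_right _ φ (n + 4) (hOp (n + 2))]
      congr 1
      simp [hq, hd, p]
    have hreal : (⟪((O q : F) : lp G 2), (q : lp G 2)⟫_ℂ).im = 0 := by
      rw [← Complex.conj_eq_iff_im, inner_conj_symm, ← hsymm]
    have hzero := hφ q
    have hself : ⟪(q : lp G 2), φ⟫_ℂ = ((‖lpTruncate φ (n + 2)‖ ^ 2 : ℝ) : ℂ) :=
      inner_lpTruncate_self φ (n + 2)
    rw [inner_add_left, inner_smul_left, hsplit, hself] at hzero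
    have him := congrArg Complex.im hzero
    simp only [Complex.add_im, hreal, Complex.im_mul_ofReal, Complex.conj_im, Complex.zero_im,
      zero_add] at him
    have hle : ‖lpTruncate φ (n + 2)‖ ^ 2 ≤ ‖⟪((O (q - p n) : F) : lp G 2), d⟫_ℂ‖ := by
      refine le_trans (le_of_eq ?_) (Complex.abs_im_le_norm _)
      have him' : (⟪((O (q - p n) : F) : lp G 2), d⟫_ℂ).im =
          z.im * ‖lpTruncate φ (n + 2)‖ ^ 2 := by linarith
      rw [him', abs_mul, hz, one_mul, abs_of_nonneg (by positivity)]
    have hbound : ‖((O (q - p n) : F) : lp G 2)‖ ≤ c * (n + 4) * ‖e‖ := by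
      have h1 := hnorm (n + 2) (q - p n) fun m hm => by
        have h2 := hp (n + 2) m hm
        have h3 := hp n m (by omega)
        simp [hq, h2, h3]
      refine h1.trans_eq ?_
      have h4 : ((q - p n : F) : lp G 2) = e := rfl
      rw [h4]
      push_cast
      ring
    have hCS := norm_inner_le_norm (𝕜 := ℂ) ((O (q - p n) : F) : lp G 2) d
    have hprod := mul_le_mul_of_nonneg_right hbound (norm_nonneg d)
    have hd2 := norm_lpTruncate_sub_sq φ (show n + 2 ≤ n + 4 by omega)
    have he2 := norm_lpTruncate_sub_sq φ (show n ≤ n + 2 by omega)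
    rw [← hd] at hd2
    rw [← he] at he2
    have hamgm : ‖e‖ * ‖d‖ ≤ ‖lpTruncate φ (n + 4)‖ ^ 2 - ‖lpTruncate φ n‖ ^ 2 := by
      nlinarith [sq_nonneg (‖e‖ - ‖d‖), sq_nonneg ‖e‖, sq_nonneg ‖d‖]
    have hfin := mul_le_mul_of_nonneg_left hamgm (show 0 ≤ c * ((n : ℝ) + 4) by positivity)
    linarith
  refine eq_zero_of_lpTruncate_eq_zero fun n => ?_
  have h := eq_zero_of_le_mul_increment hc (fun n => sq_nonneg ‖lpTruncate φ n‖)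
    (norm_lpTruncate_sq_mono φ) (norm_lpTruncate_sq_le φ) hkey n
  simpa using h

end GradedOperator

/-- **Abstract form of Proposition 3.3 of the paper.**  Let `H = ⊕ₙ Hₙ` be a Hilbert direct sum,
`ℱ` the algebraic direct sum, and `O : ℱ → ℱ` a linear operator raising the grading by at most `2`
with `‖Oψ‖ ≤ c(n+2)‖ψ‖` on `ℱ ∩ L⁽ⁿ⁾` (where `L⁽ⁿ⁾` consists of the `ψ` with `ψₘ = 0` for
`m > n`).  Then every vector of `ℱ` is an analytic vector for `O`, and if `O` is symmetric then
it is essentially self-adjoint on `ℱ`. -/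
theorem graded_operator_analytic_vectors_and_esa
    {G : ℕ → Type*} [∀ n, NormedAddCommGroup (G n)] [∀ n, InnerProductSpace ℂ (G n)]
    [∀ n, CompleteSpace (G n)]
    (F : Submodule ℂ (lp G 2))
    (hF : ∀ ψ : lp G 2, ψ ∈ F ↔ {n : ℕ | ψ n ≠ 0}.Finite)
    (O : F →ₗ[ℂ] F) (c : ℝ) (hc : 0 < c)
    (hgrade : ∀ (n : ℕ) (ψ : F), (∀ m > n, (ψ : lp G 2) m = 0) →
      ∀ m > n + 2, ((O ψ : F) : lp G 2) m = 0)
    (hnorm : ∀ (n : ℕ) (ψ : F), (∀ m > n, (ψ : lp G 2) m = 0) →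
      ‖((O ψ : F) : lp G 2)‖ ≤ c * (n + 2) * ‖(ψ : lp G 2)‖) :
    (∀ v : F, ∃ c' : ℝ, 0 < c' ∧ ∀ n : ℕ,
      ‖(((O ^ n) v : F) : lp G 2)‖ ≤ c' ^ (n + 1) * (Nat.factorial n : ℝ)) ∧
    ((∀ x y : F, ⟪((O x : F) : lp G 2), (y : lp G 2)⟫_ℂ = ⟪(x : lp G 2), ((O y : F) : lp G 2)⟫_ℂ) →
      EssSelfAdjoint F (F.subtype ∘ₗ O)) := by
  refine ⟨fun v => ?_, fun hsymm => ⟨?_, ?_⟩⟩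
  · obtain ⟨N, hN⟩ := ((hF v).1 v.2).bddAbove
    have hv : ∀ m > N, (v : lp G 2) m = 0 := fun m hm => by
      by_contra hne
      exact absurd (hN hne) (not_le.2 hm)
    have ha : 0 < c * ((N : ℝ) + 2) := by positivity
    refine ⟨c * (N + 2) + ‖(v : lp G 2)‖, by positivity, fun n => ?_⟩
    refine (norm_pow_apply_le_of_graded hc hgrade hnorm hv n).2.trans ?_
    rw [mul_right_comm, pow_succ]
    gcongr
    · exact le_add_of_nonneg_right (norm_nonneg _)
    · exact le_add_of_nonneg_left ha.le
  · exact dense_range_of_inner_eq_zero (F.subtype ∘ₗ O + Complex.I • F.subtype) fun φ hφ =>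
      eq_zero_of_inner_graded_add_smul_eq_zero hF hc hgrade hnorm hsymm (z := Complex.I)
        (by simp) hφ
  · refine dense_range_of_inner_eq_zero (F.subtype ∘ₗ O - Complex.I • F.subtype) fun φ hφ =>
      eq_zero_of_inner_graded_add_smul_eq_zero hF hc hgrade hnorm hsymm (z := -Complex.I)
        (by simp) fun x => ?_
    rw [neg_smul, ← sub_eq_add_neg]
    exact hφ x
end

section
/- Let T be a symmetric operator with dense domain D in a complex Hilbert space H. Suppose there is a collection 𝒞 of closed subspaces K ⊆ H such that: (i) for each K ∈ 𝒞, T maps D ∩ K into K, the subspace D ∩ K is dense in K, and the restriction of T to D ∩ K is essentially self-adjoint as an operator in the Hilbert space K; and (ii) the union over K ∈ 𝒞 of the subspaces D ∩ K is dense in H. Then T is essentially self-adjoint on D. -/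
open scoped InnerProductSpace

/-- If a map has range dense in each set of a family whose union is dense, then its range is
dense. -/
theorem dense_range_of_dense_subtype {α X : Type*} [TopologicalSpace X] {f : α → X}
    {𝒞 : Set (Set X)} (hf : ∀ K ∈ 𝒞, Dense {y : K | (y : X) ∈ Set.range f})
    (h𝒞 : Dense (⋃₀ 𝒞)) : Dense (Set.range f) := by
  refine dense_closure.mp (h𝒞.mono (Set.sUnion_subset fun K hK y hy => ?_))
  have hmem := image_closure_subset_closure_image continuous_subtype_val
    (Set.mem_image_of_mem Subtype.val (hf K hK ⟨y, hy⟩))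
  exact closure_mono (Set.image_subset_iff.mpr fun _ hz => hz) hmem

/-- **Abstract Locality Lemma** (Lemma 5.1 of the paper).  Let `T` be symmetric on the dense
domain `D` and let `𝒞` be a collection of closed subspaces `K ⊆ H` such that `T` maps `D ∩ K`
into `K`, `D ∩ K` is dense in `K`, and the restriction of `T` to `D ∩ K` is essentially
self-adjoint in the Hilbert space `K` (i.e. the ranges of `T|_{D∩K} ± i` are dense in `K`).
If `⋃_{K ∈ 𝒞} (D ∩ K)` is dense in `H`, then `T` is essentially self-adjoint on `D`. -/
theorem locality_lemma
    {H : Type*} [NormedAddCommGroup H] [InnerProductSpace ℂ H] [CompleteSpace H]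
    {D : Submodule ℂ H} (hD : Dense (D : Set H)) (T : D →ₗ[ℂ] H)
    (hsym : ∀ x y : D, ⟪T x, (y : H)⟫_ℂ = ⟪(x : H), T y⟫_ℂ)
    (𝒞 : Set (Submodule ℂ H))
    (hclosed : ∀ K ∈ 𝒞, IsClosed (K : Set H))
    (hinv : ∀ K ∈ 𝒞, ∀ x : D, (x : H) ∈ K → T x ∈ K)
    (hdenseK : ∀ K ∈ 𝒞, Dense {y : K | (y : H) ∈ D})
    (hesaK : ∀ K ∈ 𝒞,
      Dense {y : K | ∃ x : D, (x : H) ∈ K ∧ T x + Complex.I • (x : H) = (y : H)} ∧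
      Dense {y : K | ∃ x : D, (x : H) ∈ K ∧ T x - Complex.I • (x : H) = (y : H)})
    (hunion : Dense (⋃ K ∈ 𝒞, ((D : Set H) ∩ (K : Set H)))) :
    EssSelfAdjoint D T := by
  have hsUnion : Dense (⋃₀ ((fun K : Submodule ℂ H => (K : Set H)) '' 𝒞)) := by
    refine hunion.mono (Set.iUnion₂_subset fun K hK y hy => ?_)
    exact ⟨K, Set.mem_image_of_mem _ hK, hy.2⟩
  constructor
  · refine dense_range_of_dense_subtype (Set.forall_mem_image.mpr fun K hK => ?_) hsUnion
    refine (hesaK K hK).1.mono ?_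
    rintro y ⟨x, -, hx⟩
    exact ⟨x, hx⟩
  · refine dense_range_of_dense_subtype (Set.forall_mem_image.mpr fun K hK => ?_) hsUnion
    refine (hesaK K hK).2.mono ?_
    rintro y ⟨x, -, hx⟩
    exact ⟨x, hx⟩
end

section
/- Let (H_n)_{n∈ℕ} be complex Hilbert spaces, H their Hilbert direct sum, D ⊆ H the algebraic direct sum of dense subspaces D_n ⊆ H_n, and on D define (Nψ)_n := n ψ_n. Let A, B : D → H be linear operators and c, d ≥ 0 constants such that Re⟨Nψ, (A + B)ψ⟩ ≥ −c⟨ψ, (N + I)ψ⟩ for all ψ ∈ D. Then for all ψ ∈ D: ‖(A + B + dN)ψ‖² ≥ (d‖Nψ‖ − c‖ψ‖)² − (c² + 2cd)‖ψ‖², and consequently d‖Nψ‖ ≤ ‖(A + B + dN)ψ‖ + (c + √(c² + 2cd))‖ψ‖. -/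
open scoped InnerProductSpace

/-- If `Re⟪v, w⟫ ≥ -c Re⟪u, v + u⟫`, then `‖w + d v‖²` is at least
`(d‖v‖ - c‖u‖)² - (c² + 2cd)‖u‖²`. -/
theorem sq_norm_add_smul_ge_of_re_inner_ge {E : Type*} [NormedAddCommGroup E]
    [InnerProductSpace ℂ E] {u v w : E} {c d : ℝ} (hc : 0 ≤ c) (hd : 0 ≤ d)
    (h : -c * (⟪u, v + u⟫_ℂ).re ≤ (⟪v, w⟫_ℂ).re) :
    (d * ‖v‖ - c * ‖u‖) ^ 2 - (c ^ 2 + 2 * c * d) * ‖u‖ ^ 2 ≤ ‖w + (d : ℂ) • v‖ ^ 2 := by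
  have hcs : (⟪u, v + u⟫_ℂ).re ≤ ‖u‖ * ‖v‖ + ‖u‖ ^ 2 := by
    have huv : (⟪u, v⟫_ℂ).re ≤ ‖u‖ * ‖v‖ := re_inner_le_norm (𝕜 := ℂ) u v
    have huu : (⟪u, u⟫_ℂ).re = ‖u‖ ^ 2 := inner_self_eq_norm_sq (𝕜 := ℂ) u
    rw [inner_add_right, Complex.add_re, huu]
    linarith
  have hlow : -c * (‖u‖ * ‖v‖ + ‖u‖ ^ 2) ≤ (⟪v, w⟫_ℂ).re :=
    le_trans (by nlinarith) h
  have hexp : ‖w + (d : ℂ) • v‖ ^ 2 = ‖w‖ ^ 2 + 2 * (d * (⟪v, w⟫_ℂ).re) + d ^ 2 * ‖v‖ ^ 2 := by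
    have hsymm : (⟪w, v⟫_ℂ).re = (⟪v, w⟫_ℂ).re := inner_re_symm (𝕜 := ℂ) w v
    have hnorm : ‖(d : ℂ) • v‖ = d * ‖v‖ := by
      rw [norm_smul, Complex.norm_of_nonneg hd]
    rw [norm_add_sq (𝕜 := ℂ), hnorm, inner_smul_right, RCLike.re_to_complex,
      Complex.re_ofReal_mul, hsymm]
    ring
  rw [hexp]
  nlinarith [mul_le_mul_of_nonneg_left hlow hd, sq_nonneg ‖w‖]

/-- A lower bound `(a - b)² - k p² ≤ m²` gives `a ≤ m + b + √k p`. -/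
theorem le_add_sqrt_mul_of_sq_sub_le {a b k p m : ℝ} (hk : 0 ≤ k) (hp : 0 ≤ p) (hm : 0 ≤ m)
    (h : (a - b) ^ 2 - k * p ^ 2 ≤ m ^ 2) : a ≤ m + (b + √k * p) := by
  have hs : 0 ≤ √k * p := by positivity
  have hsq : (√k * p) ^ 2 = k * p ^ 2 := by rw [mul_pow, Real.sq_sqrt hk]
  have hab : a - b ≤ m + √k * p :=
    le_trans (le_abs_self _) <| abs_le_of_sq_le_sq (by nlinarith [mul_nonneg hm hs]) (by positivity)
  linarith

/-- **Key estimate of Konrady's trick** (proof of Theorem 3.5 of the paper).  On the Hilbert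
direct sum `H = ⊕ₙ Hₙ` with `D` the algebraic direct sum of dense subspaces `Dₙ`, `N` the number
operator, and `A, B : D → H` linear with `Re⟨Nψ, (A+B)ψ⟩ ≥ -c⟨ψ, (N+I)ψ⟩`, one has
`‖(A+B+dN)ψ‖² ≥ (d‖Nψ‖ - c‖ψ‖)² - (c² + 2cd)‖ψ‖²` and consequently
`d‖Nψ‖ ≤ ‖(A+B+dN)ψ‖ + (c + √(c² + 2cd))‖ψ‖`. -/
theorem konrady_estimate
    {G : ℕ → Type*} [∀ n, NormedAddCommGroup (G n)] [∀ n, InnerProductSpace ℂ (G n)]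
    [∀ n, CompleteSpace (G n)]
    (Dn : ∀ n, Submodule ℂ (G n)) (hDn : ∀ n, Dense ((Dn n : Set (G n))))
    (D : Submodule ℂ (lp G 2))
    (hD : ∀ ψ : lp G 2,
      ψ ∈ D ↔ {n : ℕ | ψ n ≠ 0}.Finite ∧ ∀ n, ψ n ∈ Dn n)
    (N : D →ₗ[ℂ] lp G 2)
    (hN : ∀ (ψ : D) (n : ℕ), (N ψ : lp G 2) n = (n : ℂ) • (ψ : lp G 2) n)
    (A B : D →ₗ[ℂ] lp G 2) (c d : ℝ) (hc : 0 ≤ c) (hd : 0 ≤ d)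
    (hlow : ∀ ψ : D,
      -c * (⟪(ψ : lp G 2), N ψ + (ψ : lp G 2)⟫_ℂ).re ≤ (⟪N ψ, A ψ + B ψ⟫_ℂ).re) :
    ∀ ψ : D,
      ((d * ‖N ψ‖ - c * ‖ψ‖) ^ 2 - (c ^ 2 + 2 * c * d) * ‖ψ‖ ^ 2
          ≤ ‖A ψ + B ψ + (d : ℂ) • N ψ‖ ^ 2) ∧
      (d * ‖N ψ‖ ≤ ‖A ψ + B ψ + (d : ℂ) • N ψ‖
          + (c + Real.sqrt (c ^ 2 + 2 * c * d)) * ‖ψ‖) := by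
  intro ψ
  have hsq := sq_norm_add_smul_ge_of_re_inner_ge hc hd (hlow ψ)
  refine ⟨hsq, ?_⟩
  rw [add_mul]
  exact le_add_sqrt_mul_of_sq_sub_le (by positivity) (norm_nonneg _) (norm_nonneg _) hsq
end
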